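/- arXiv:1406.3842 — 2 statements merged into one kernel-verified Lean document; each statement's English description precedes it below -/
import Mathlib

section
/- (Riesz factorization, weak form) Every f ∈ H¹ of the unit disk can be written f = g·h with g, h ∈ H² and ‖g‖_{H²}² = ‖h‖_{H²}² = ‖f‖_{H¹}; in particular H¹ = H²·H². -/
open Metric

/-- The `p`-th boundary integral mean of `f` at radius `r`. -/
noncomputable def hardyMean (p : ℝ) (f : ℂ → ℂ) (r : ℝ) : ℝ :=
  ((1 / (2 * Real.pi)) *
    ∫ t in (0:ℝ)..(2 * Real.pi), ‖f (r * Complex.exp (t * Complex.I))‖ ^ p) ^ (1 / p)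

/-- Membership in the Hardy space `H^p` of the unit disk. -/
def MemHp (p : ℝ) (f : ℂ → ℂ) : Prop :=
  DifferentiableOn ℂ f (ball 0 1) ∧
    BddAbove (Set.range fun r : Set.Ioo (0:ℝ) 1 => hardyMean p f r)

/-- The `H^p` norm of `f`. -/
noncomputable def hpNorm (p : ℝ) (f : ℂ → ℂ) : ℝ :=
  ⨆ r : Set.Ioo (0:ℝ) 1, hardyMean p f r

/-!
A polynomial has a factorization `p = g * h` with `‖g‖ = ‖h‖` on the unit circle, obtained from
Blaschke factors and square roots of linear factors; there `‖g‖ ^ 2 = ‖h‖ ^ 2 = ‖p‖`, so by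
Parseval's identity the Taylor coefficients of `g` and `h` have squared `ℓ²` norm at most the mean
of `‖p‖`. The `ℓ²` balls are compact for coefficientwise convergence, hence such a factorization
survives the passage from Taylor polynomials to `f (r z)`, and from there to `f` as `r → 1`; no
Blaschke product over infinitely many zeros is formed. Finally
`‖f‖₁ ≤ (‖g‖₂ ^ 2 + ‖h‖₂ ^ 2) / 2 ≤ ‖f‖₁` forces both norms to be equal to `‖f‖₁`.
-/

open Filter Polynomial Set Topology
open Complex (sqrt)
open Real (circleAverage)
open scoped ComplexConjugate Pointwise PowerSeries PowerSeries.WithPiTopology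

section BalancedFactorization

/-- `F` is, on the closed unit disc, a product of two functions of the disc algebra whose moduli
agree on the unit circle, and are there both equal to `√‖F‖`. -/
def HasBalancedFactorization (F : ℂ → ℂ) : Prop :=
  ∃ g h : ℂ → ℂ, DiffContOnCl ℂ g (ball 0 1) ∧ DiffContOnCl ℂ h (ball 0 1) ∧
    EqOn F (g * h) (closedBall 0 1) ∧ ∀ z ∈ sphere (0 : ℂ) 1, ‖g z‖ = ‖h z‖

theorem HasBalancedFactorization.mul {F G : ℂ → ℂ} (hF : HasBalancedFactorization F)
    (hG : HasBalancedFactorization G) : HasBalancedFactorization fun z => F z * G z := by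
  obtain ⟨g₁, h₁, hg₁, hh₁, hF, hn₁⟩ := hF
  obtain ⟨g₂, h₂, hg₂, hh₂, hG, hn₂⟩ := hG
  refine ⟨g₁ * g₂, h₁ * h₂, hg₁.smul hg₂, hh₁.smul hh₂, fun z hz => ?_, fun z hz => ?_⟩
  · simp only [Pi.mul_apply, hF hz, hG hz]
    ring
  · simp only [Pi.mul_apply, norm_mul, hn₁ z hz, hn₂ z hz]

theorem hasBalancedFactorization_sq {s : ℂ → ℂ} (hs : DiffContOnCl ℂ s (ball 0 1)) :
    HasBalancedFactorization fun z => s z ^ 2 :=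
  ⟨s, s, hs, hs, fun _ _ => sq _, fun _ _ => rfl⟩

theorem hasBalancedFactorization_const (c : ℂ) : HasBalancedFactorization fun _ => c := by
  obtain ⟨d, rfl⟩ := IsAlgClosed.exists_pow_nat_eq c two_pos
  exact hasBalancedFactorization_sq diffContOnCl_const

theorem diffContOnCl_sqrt_re_pos : DiffContOnCl ℂ sqrt {z | 0 < z.re} where
  differentiableOn := Complex.differentiableOn_sqrt.mono fun _ hz => Or.inl hz
  continuousOn z hz := by
    rw [Complex.closure_setOfPred_lt_re] at hz
    exact (Complex.continuousAt_sqrt (Or.inl hz)).continuousWithinAt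

theorem diffContOnCl_sqrt_one_sub_mul {w : ℂ} (hw : ‖w‖ ≤ 1) :
    DiffContOnCl ℂ (fun z => sqrt (1 - w * z)) (ball 0 1) := by
  have hlin : Differentiable ℂ fun z => 1 - w * z := by fun_prop
  refine diffContOnCl_sqrt_re_pos.comp hlin.diffContOnCl fun z hz => ?_
  have hre : (w * z).re < 1 := calc
    (w * z).re ≤ ‖w‖ * ‖z‖ := (Complex.re_le_norm _).trans_eq (norm_mul w z)
    _ ≤ ‖z‖ := mul_le_of_le_one_left (norm_nonneg z) hw
    _ < 1 := mem_ball_zero_iff.1 hz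
  simpa using hre

theorem hasBalancedFactorization_one_sub_mul {w : ℂ} (hw : ‖w‖ ≤ 1) :
    HasBalancedFactorization fun z => 1 - w * z := by
  simpa only [sqrt, Complex.cpow_ofNat_inv_pow] using
    hasBalancedFactorization_sq (diffContOnCl_sqrt_one_sub_mul hw)

theorem one_sub_mul_ne_zero {w z : ℂ} (hw : ‖w‖ < 1) (hz : z ∈ closedBall (0 : ℂ) 1) :
    1 - w * z ≠ 0 := by
  intro h
  have : ‖w * z‖ < 1 := by
    rw [norm_mul]
    exact mul_lt_one_of_nonneg_of_lt_one_left (norm_nonneg w) hw (mem_closedBall_zero_iff.1 hz)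
  simp [← sub_eq_zero.1 h] at this

theorem norm_sub_eq_norm_one_sub_conj_mul (α : ℂ) {z : ℂ} (hz : z ∈ sphere (0 : ℂ) 1) :
    ‖z - α‖ = ‖1 - conj α * z‖ := by
  have hz1 : ‖z‖ = 1 := mem_sphere_zero_iff_norm.1 hz
  calc
    ‖z - α‖ = ‖conj (z - α) * z‖ := by rw [norm_mul, Complex.norm_conj, hz1, mul_one]
    _ = ‖1 - conj α * z‖ := by rw [map_sub, sub_mul, Complex.conj_mul', hz1]; simp

/- With `s = √(1 - conj α z)` and the Blaschke factor `b = (z - α) / s ^ 2`, the factorization is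
`z - α = (b s) s`. -/
theorem hasBalancedFactorization_sub_of_norm_lt_one {α : ℂ} (hα : ‖α‖ < 1) :
    HasBalancedFactorization fun z => z - α := by
  set s : ℂ → ℂ := fun z => sqrt (1 - conj α * z)
  have hα' : ‖conj α‖ < 1 := by rwa [Complex.norm_conj]
  have hs : DiffContOnCl ℂ s (ball 0 1) := diffContOnCl_sqrt_one_sub_mul hα'.le
  have hs_sq (z : ℂ) : s z ^ 2 = 1 - conj α * z := Complex.cpow_ofNat_inv_pow _ 2
  have hs_ne {z : ℂ} (hz : z ∈ closedBall (0 : ℂ) 1) : s z ≠ 0 :=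
    ne_zero_pow two_ne_zero (hs_sq z ▸ one_sub_mul_ne_zero hα' hz)
  have hlin : Differentiable ℂ fun z => z - α := by fun_prop
  refine ⟨fun z => (z - α) * (s z)⁻¹, s, hlin.diffContOnCl.smul <| hs.inv fun z hz => hs_ne ?_, hs,
    fun z hz => ?_, fun z hz => ?_⟩
  · rwa [closure_ball (0 : ℂ) one_ne_zero] at hz
  · simp [hs_ne hz]
  · have : ‖s z‖ ≠ 0 := norm_ne_zero_iff.2 (hs_ne (sphere_subset_closedBall hz))
    rw [norm_mul, norm_sub_eq_norm_one_sub_conj_mul α hz, ← hs_sq, norm_pow, norm_inv]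
    field_simp

theorem hasBalancedFactorization_sub_of_one_le_norm {α : ℂ} (hα : 1 ≤ ‖α‖) :
    HasBalancedFactorization fun z => z - α := by
  have hα0 : α ≠ 0 := norm_pos_iff.1 (one_pos.trans_le hα)
  have hinv : ‖α⁻¹‖ ≤ 1 := (norm_inv α).trans_le (inv_le_one_of_one_le₀ hα)
  convert (hasBalancedFactorization_const (-α)).mul (hasBalancedFactorization_one_sub_mul hinv)
    using 2 with z
  field_simp
  ring

theorem hasBalancedFactorization_sub (α : ℂ) : HasBalancedFactorization fun z => z - α :=
  (lt_or_ge ‖α‖ 1).elim hasBalancedFactorization_sub_of_norm_lt_one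
    hasBalancedFactorization_sub_of_one_le_norm

theorem hasBalancedFactorization_eval (P : ℂ[X]) : HasBalancedFactorization P.eval := by
  have hroots (s : Multiset ℂ) : HasBalancedFactorization fun z => (s.map (z - ·)).prod := by
    induction s using Multiset.induction_on with
    | empty => simpa using hasBalancedFactorization_const 1
    | cons α s ih => simpa using (hasBalancedFactorization_sub α).mul ih
  convert (hasBalancedFactorization_const P.leadingCoeff).mul (hroots P.roots) using 1
  ext z
  exact (IsAlgClosed.splits P).eval_eq_prod_roots z

end BalancedFactorization

section TaylorSeries

/-- The power series `φ` converges to `f` on the open unit disc; `φ` is then the Taylor series of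
`f` at `0`, through which factorizations of `f` are read off in `ℂ⟦X⟧`. -/
def HasTaylorSeriesOnDisc (f : ℂ → ℂ) (φ : ℂ⟦X⟧) : Prop :=
  ∀ z ∈ ball (0 : ℂ) 1, HasSum (fun k => φ.coeff k * z ^ k) (f z)

variable {f g : ℂ → ℂ} {φ ψ : ℂ⟦X⟧}

theorem exists_hasTaylorSeriesOnDisc (hf : DifferentiableOn ℂ f (ball 0 1)) :
    ∃ φ, HasTaylorSeriesOnDisc f φ := by
  refine ⟨.mk fun k => (k.factorial : ℂ)⁻¹ * iteratedDeriv k f 0, fun z hz => ?_⟩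
  simpa [mul_assoc, mul_comm, mul_left_comm] using Complex.hasSum_taylorSeries_on_ball hf hz

theorem hasTaylorSeriesOnDisc_eval (P : ℂ[X]) :
    HasTaylorSeriesOnDisc P.eval (P : ℂ⟦X⟧) := by
  intro z _
  simp only [Polynomial.coeff_coe, P.eval_eq_sum_range]
  exact hasSum_sum_of_ne_finset_zero fun k hk => by
    rw [P.coeff_eq_zero_of_natDegree_lt (by simpa using hk), zero_mul]

namespace HasTaylorSeriesOnDisc

theorem hasFPowerSeriesOnBall (hf : HasTaylorSeriesOnDisc f φ) :
    HasFPowerSeriesOnBall f (.ofScalars ℂ fun k => φ.coeff k) 0 1 where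
  r_le := by
    refine ENNReal.le_of_forall_nnreal_lt fun r hr => ?_
    have hr_mem : ((r : ℝ) : ℂ) ∈ ball (0 : ℂ) 1 := by simpa using hr
    refine FormalMultilinearSeries.le_radius_of_tendsto _ (l := 0) ?_
    simpa using (hf _ hr_mem).summable.tendsto_atTop_zero.norm
  r_pos := one_pos
  hasSum {z} hz := by
    simpa [FormalMultilinearSeries.ofScalars_apply_eq, mul_comm] using hf z (by
      rwa [← ENNReal.coe_one, Metric.eball_coe, NNReal.coe_one] at hz)

theorem differentiableOn (hf : HasTaylorSeriesOnDisc f φ) :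
    DifferentiableOn ℂ f (ball 0 1) := by
  have hdiff := hf.hasFPowerSeriesOnBall.differentiableOn
  rwa [← ENNReal.coe_one, Metric.eball_coe, NNReal.coe_one] at hdiff

theorem unique (hφ : HasTaylorSeriesOnDisc f φ) (hψ : HasTaylorSeriesOnDisc f ψ) : φ = ψ := by
  have heq := hφ.hasFPowerSeriesOnBall.hasFPowerSeriesAt.eq_formalMultilinearSeries
    hψ.hasFPowerSeriesOnBall.hasFPowerSeriesAt
  ext k
  simpa using congr_arg (FormalMultilinearSeries.coeff · k) heq

theorem congr (hf : HasTaylorSeriesOnDisc f φ) (hfg : EqOn f g (ball 0 1)) :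
    HasTaylorSeriesOnDisc g φ :=
  fun z hz => hfg hz ▸ hf z hz

theorem mul (hf : HasTaylorSeriesOnDisc f φ) (hg : HasTaylorSeriesOnDisc g ψ) :
    HasTaylorSeriesOnDisc (f * g) (φ * ψ) := by
  intro z hz
  have hφ := (hf z hz).summable.norm
  have hψ := (hg z hz).summable.norm
  have hcoeff (n : ℕ) : (φ * ψ).coeff n * z ^ n =
      ∑ kl ∈ Finset.HasAntidiagonal.antidiagonal n,
        φ.coeff kl.1 * z ^ kl.1 * (ψ.coeff kl.2 * z ^ kl.2) := by
    rw [PowerSeries.coeff_mul, Finset.sum_mul]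
    refine Finset.sum_congr rfl fun kl hkl => ?_
    rw [← Finset.HasAntidiagonal.mem_antidiagonal.1 hkl]
    ring
  simp only [hcoeff, Pi.mul_apply, ← (hf z hz).tsum_eq, ← (hg z hz).tsum_eq,
    tsum_mul_tsum_eq_tsum_sum_antidiagonal_of_summable_norm hφ hψ]
  exact (summable_norm_sum_mul_antidiagonal_of_summable_norm hφ hψ).of_norm.hasSum

theorem summable_norm_coeff_rescale (hf : HasTaylorSeriesOnDisc f φ) {w : ℂ} (hw : ‖w‖ < 1) :
    Summable fun k => ‖(PowerSeries.rescale w φ).coeff k‖ := by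
  simpa [mul_comm] using (hf w (by simpa using hw)).summable.norm

end HasTaylorSeriesOnDisc

end TaylorSeries

section CircleAverage

variable {f : ℂ → ℂ} {φ : ℂ⟦X⟧}

theorem norm_eval_trunc_le_tsum (hφ : Summable fun k => ‖φ.coeff k‖) {z : ℂ}
    (hz : ‖z‖ ≤ 1) (n : ℕ) : ‖(φ.trunc n).eval z‖ ≤ ∑' k, ‖φ.coeff k‖ := by
  rw [eval, PowerSeries.eval₂_trunc_eq_sum_range]
  calc
    ‖∑ k ∈ Finset.range n, RingHom.id ℂ (φ.coeff k) * z ^ k‖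
      ≤ ∑ k ∈ Finset.range n, ‖φ.coeff k‖ :=
        norm_sum_le_of_le _ fun k _ => by
          rw [RingHom.id_apply, norm_mul, norm_pow]
          exact mul_le_of_le_one_right (norm_nonneg _) (pow_le_one₀ (norm_nonneg z) hz)
    _ ≤ ∑' k, ‖φ.coeff k‖ := hφ.sum_le_tsum _ fun k _ => norm_nonneg _

theorem tendsto_circleAverage_comp_eval_trunc {E : Type*} [NormedAddCommGroup E] [NormedSpace ℝ E]
    (hφ : Summable fun k => ‖φ.coeff k‖)
    (hf : ∀ z ∈ sphere (0 : ℂ) 1, HasSum (fun k => φ.coeff k * z ^ k) (f z))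
    {u : ℂ → E} (hu : Continuous u) :
    Tendsto (fun n => circleAverage (fun z => u ((φ.trunc n).eval z)) 0 1) atTop
      (𝓝 (circleAverage (fun z => u (f z)) 0 1)) := by
  obtain ⟨B, hB⟩ := (isCompact_closedBall (0 : ℂ) (∑' k, ‖φ.coeff k‖)).exists_bound_of_continuousOn
    hu.continuousOn
  have hmem (θ : ℝ) : circleMap 0 1 θ ∈ sphere (0 : ℂ) 1 := circleMap_mem_sphere 0 zero_le_one θ
  refine Tendsto.const_smul ?_ _
  refine intervalIntegral.tendsto_integral_filter_of_dominated_convergence (fun _ => B)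
    (.of_forall fun n => ?_) (.of_forall fun n => .of_forall fun θ _ => ?_)
    intervalIntegrable_const (.of_forall fun θ _ => ?_)
  · exact (hu.comp ((φ.trunc n).continuous.comp
      (continuous_circleMap 0 1))).aestronglyMeasurable
  · exact hB _ <| mem_closedBall_zero_iff.2 <|
      norm_eval_trunc_le_tsum hφ (mem_sphere_zero_iff_norm.1 (hmem θ)).le n
  · refine hu.continuousAt.tendsto.comp ?_
    simpa [eval, PowerSeries.eval₂_trunc_eq_sum_range] using (hf _ (hmem θ)).tendsto_sum_nat

theorem hasSum_sq_norm_coeff (hφ : Summable fun k => ‖φ.coeff k‖)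
    (hf : ∀ z ∈ sphere (0 : ℂ) 1, HasSum (fun k => φ.coeff k * z ^ k) (f z)) :
    HasSum (fun k => ‖φ.coeff k‖ ^ 2) (circleAverage (fun z => ‖f z‖ ^ 2) 0 1) := by
  rw [hasSum_iff_tendsto_nat_of_nonneg fun k => sq_nonneg _]
  refine (tendsto_circleAverage_comp_eval_trunc hφ hf (u := fun w => ‖w‖ ^ 2)
    (by fun_prop)).congr fun n => ?_
  have hcoeff {k : ℕ} (hk : k ∈ Finset.range n) : (φ.trunc n).coeff k = φ.coeff k := by
    rw [PowerSeries.coeff_trunc, if_pos (Finset.mem_range.1 hk)]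
  have hsupport : (φ.trunc n).support ⊆ Finset.range n := by
    intro k hk
    by_contra hkn
    rw [Finset.mem_range] at hkn
    exact mem_support_iff.1 hk (by rw [PowerSeries.coeff_trunc, if_neg hkn])
  calc
    circleAverage (fun z => ‖(φ.trunc n).eval z‖ ^ 2) 0 1
      = ∑ k ∈ (φ.trunc n).support, ‖(φ.trunc n).coeff k‖ ^ 2 :=
        (sum_sq_norm_coeff_eq_circleAverage _).symm
    _ = ∑ k ∈ Finset.range n, ‖(φ.trunc n).coeff k‖ ^ 2 :=
        Finset.sum_subset hsupport fun k _ hk => by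
          rw [notMem_support_iff.1 hk, norm_zero, zero_pow two_ne_zero]
    _ = ∑ k ∈ Finset.range n, ‖φ.coeff k‖ ^ 2 :=
        Finset.sum_congr rfl fun k hk => by rw [hcoeff hk]

namespace HasTaylorSeriesOnDisc

theorem hasSum_rescale (hf : HasTaylorSeriesOnDisc f φ) {w : ℂ} (hw : ‖w‖ < 1) {z : ℂ}
    (hz : z ∈ sphere (0 : ℂ) 1) :
    HasSum (fun k => (PowerSeries.rescale w φ).coeff k * z ^ k) (f (w * z)) := by
  have hwz : w * z ∈ ball (0 : ℂ) 1 := by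
    simpa [mem_sphere_zero_iff_norm.1 hz] using hw
  simpa [mul_pow, mul_assoc, mul_left_comm] using hf _ hwz

end HasTaylorSeriesOnDisc

end CircleAverage

section L2Ball

/-- The power series whose coefficients have squared `ℓ²` norm at most `M`. Through Parseval's
identity this is the ball of squared radius `M` of the Hardy space `H²`; it is stated by means of
partial sums so that it is visibly closed in the topology of coefficientwise convergence. -/
def l2Ball (M : ℝ) : Set ℂ⟦X⟧ :=
  {a | ∀ n, ∑ k ∈ Finset.range n, ‖a.coeff k‖ ^ 2 ≤ M}

variable {M : ℝ} {a : ℂ⟦X⟧}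

theorem nonneg_of_mem_l2Ball (ha : a ∈ l2Ball M) : 0 ≤ M := by
  simpa using ha 0

theorem l2Ball_mono : Monotone l2Ball :=
  fun _ _ hM _ ha _ => (ha _).trans hM

theorem norm_coeff_le_of_mem_l2Ball (ha : a ∈ l2Ball M) (k : ℕ) : ‖a.coeff k‖ ≤ √M := by
  refine Real.le_sqrt_of_sq_le (le_trans ?_ (ha (k + 1)))
  exact Finset.single_le_sum (f := fun k => ‖a.coeff k‖ ^ 2) (fun _ _ => sq_nonneg _)
    (Finset.self_mem_range_succ k)

theorem mem_l2Ball_of_hasSum (ha : HasSum (fun k => ‖a.coeff k‖ ^ 2) M) : a ∈ l2Ball M :=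
  fun _ => sum_le_hasSum _ (fun _ _ => sq_nonneg _) ha

theorem rescale_mem_l2Ball (ha : a ∈ l2Ball M) {w : ℂ} (hw : ‖w‖ ≤ 1) :
    PowerSeries.rescale w a ∈ l2Ball M := by
  refine fun n => le_trans (Finset.sum_le_sum fun k _ => ?_) (ha n)
  rw [PowerSeries.coeff_rescale, norm_mul, norm_pow]
  gcongr
  exact mul_le_of_le_one_left (norm_nonneg _) (pow_le_one₀ (norm_nonneg w) hw)

theorem isClosed_setOf_mem_l2Ball : IsClosed {x : ℝ × ℂ⟦X⟧ | x.2 ∈ l2Ball x.1} := by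
  have hcoeff (k : ℕ) : Continuous fun x : ℝ × ℂ⟦X⟧ => x.2.coeff k :=
    (PowerSeries.WithPiTopology.continuous_coeff ℂ k).comp continuous_snd
  have hsum (n : ℕ) :
      IsClosed {x : ℝ × ℂ⟦X⟧ | ∑ k ∈ Finset.range n, ‖x.2.coeff k‖ ^ 2 ≤ x.1} :=
    isClosed_le (by fun_prop) continuous_fst
  convert isClosed_iInter hsum using 1
  ext x
  simp only [l2Ball, mem_ofPred_eq, mem_iInter]

theorem isCompact_l2Ball (M : ℝ) : IsCompact (l2Ball M) := by
  refine (isCompact_univ_pi fun _ => isCompact_closedBall (0 : ℂ) √M).of_isClosed_subset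
    (isClosed_setOf_mem_l2Ball.preimage (Continuous.prodMk_right M)) fun a ha d _ => ?_
  rw [mem_closedBall_zero_iff]
  rw [Finsupp.unique_single d]
  exact norm_coeff_le_of_mem_l2Ball ha (d default)

theorem mem_l2Ball_mul_l2Ball_of_tendsto {ι : Type*} {l : Filter ι} [l.NeBot] {M : ι → ℝ} {L : ℝ}
    {c : ι → ℂ⟦X⟧} {d : ℂ⟦X⟧} (hM : Tendsto M l (𝓝 L)) (hc : Tendsto c l (𝓝 d))
    (h : ∀ᶠ i in l, c i ∈ l2Ball (M i) * l2Ball (M i)) : d ∈ l2Ball L * l2Ball L := by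
  -- The radius `M i` varies, so compactness is applied to triples `(N, a, b)` rather than to pairs.
  let F : ℝ × ℂ⟦X⟧ × ℂ⟦X⟧ → ℝ × ℂ⟦X⟧ := fun x => (x.1, x.2.1 * x.2.2)
  let K : Set (ℝ × ℂ⟦X⟧ × ℂ⟦X⟧) := {x | x.2.1 ∈ l2Ball x.1 ∧ x.2.2 ∈ l2Ball x.1}
  have hK : IsClosed K :=
    (isClosed_setOf_mem_l2Ball.preimage (continuous_fst.prodMk continuous_snd.fst)).inter
      (isClosed_setOf_mem_l2Ball.preimage (continuous_fst.prodMk continuous_snd.snd))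
  have hF : Continuous F := continuous_fst.prodMk (continuous_snd.fst.mul continuous_snd.snd)
  let B : Set (ℝ × ℂ⟦X⟧ × ℂ⟦X⟧) := Icc 0 (L + 1) ×ˢ l2Ball (L + 1) ×ˢ l2Ball (L + 1)
  have hB : IsCompact B := isCompact_Icc.prod ((isCompact_l2Ball _).prod (isCompact_l2Ball _))
  have hclosed : IsClosed (F '' (B ∩ K)) := ((hB.inter_right hK).image hF).isClosed
  have hmem : ∀ᶠ i in l, (M i, c i) ∈ F '' (B ∩ K) := by
    filter_upwards [h, hM.eventually_le_const (lt_add_one L)] with i ⟨a, ha, b, hb, hab⟩ hi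
    exact ⟨(M i, a, b), ⟨⟨⟨nonneg_of_mem_l2Ball ha, hi⟩, l2Ball_mono hi ha, l2Ball_mono hi hb⟩,
      ha, hb⟩, Prod.ext rfl hab⟩
  obtain ⟨⟨N, a, b⟩, ⟨-, ha, hb⟩, hab⟩ := hclosed.mem_of_tendsto (hM.prodMk_nhds hc) hmem
  obtain ⟨rfl, rfl⟩ := Prod.ext_iff.1 hab
  exact mul_mem_mul ha hb

end L2Ball

section FactorizationOfTaylorSeries

variable {f : ℂ → ℂ} {φ a : ℂ⟦X⟧} {M r : ℝ}

theorem exists_hasTaylorSeriesOnDisc_of_mem_l2Ball (ha : a ∈ l2Ball M) :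
    ∃ f, HasTaylorSeriesOnDisc f a := by
  refine ⟨fun z => ∑' k, a.coeff k * z ^ k, fun z hz => ?_⟩
  have hz1 : ‖z‖ < 1 := mem_ball_zero_iff.1 hz
  refine (Summable.of_norm_bounded ((summable_geometric_of_lt_one (norm_nonneg z) hz1).mul_left √M)
    fun k => ?_).hasSum
  rw [norm_mul, norm_pow]
  gcongr
  exact norm_coeff_le_of_mem_l2Ball ha k

theorem tendsto_rescale_ofReal_nhdsLT_one (φ : ℂ⟦X⟧) :
    Tendsto (fun r : ℝ => PowerSeries.rescale (r : ℂ) φ) (𝓝[<] 1) (𝓝 φ) := by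
  refine (PowerSeries.WithPiTopology.tendsto_iff_coeff_tendsto ..).2 fun k => ?_
  have hcont : Continuous fun r : ℝ => (r : ℂ) ^ k * φ.coeff k := by fun_prop
  simpa using hcont.continuousWithinAt (s := Iio 1) (x := 1) |>.tendsto

namespace HasTaylorSeriesOnDisc

theorem hasSum_sq_norm_coeff_rescale (hf : HasTaylorSeriesOnDisc f φ) (hr : |r| < 1) :
    HasSum (fun k => ‖(PowerSeries.rescale (r : ℂ) φ).coeff k‖ ^ 2)
      (circleAverage (fun z => ‖f z‖ ^ 2) 0 r) := by
  have hr' : ‖(r : ℂ)‖ < 1 := by rwa [Complex.norm_real]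
  rw [Real.circleAverage_eq_circleAverage_zero_one]
  simpa only [add_zero] using
    hasSum_sq_norm_coeff (hf.summable_norm_coeff_rescale hr') fun z hz => hf.hasSum_rescale hr' hz

theorem circleAverage_sq_norm_le_of_mem_l2Ball (hf : HasTaylorSeriesOnDisc f φ) (hφ : φ ∈ l2Ball M)
    (hr : |r| < 1) : circleAverage (fun z => ‖f z‖ ^ 2) 0 r ≤ M :=
  le_of_tendsto' (hf.hasSum_sq_norm_coeff_rescale hr).tendsto_sum_nat
    (rescale_mem_l2Ball hφ (by simpa using hr.le))

theorem mem_l2Ball_circleAverage (hf : HasTaylorSeriesOnDisc f φ)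
    (hcl : DiffContOnCl ℂ f (ball 0 1)) :
    φ ∈ l2Ball (circleAverage (fun z => ‖f z‖ ^ 2) 0 1) := by
  have hcont : ContinuousOn (fun r => circleAverage (fun z => ‖f z‖ ^ 2) 0 r) (Icc 0 1) := by
    refine Real.ContinuousOn.circleAverage ((hcl.continuousOn_ball.norm.pow 2).mono fun z hz => ?_)
      fun r hr => hr.1
    simpa using hz
  have hlim : Tendsto (fun r => circleAverage (fun z => ‖f z‖ ^ 2) 0 r) (𝓝[<] 1)
      (𝓝 (circleAverage (fun z => ‖f z‖ ^ 2) 0 1)) :=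
    (hcont 1 (right_mem_Icc.2 zero_le_one)).mono_of_mem_nhdsWithin (Icc_mem_nhdsLT zero_lt_one)
  refine isClosed_setOf_mem_l2Ball.mem_of_tendsto
    (hlim.prodMk_nhds (tendsto_rescale_ofReal_nhdsLT_one φ)) ?_
  filter_upwards [Ioo_mem_nhdsLT zero_lt_one] with r hr
  exact mem_l2Ball_of_hasSum
    (hf.hasSum_sq_norm_coeff_rescale ((abs_of_pos hr.1).trans_lt hr.2))

end HasTaylorSeriesOnDisc

theorem coe_mem_l2Ball_mul_l2Ball (P : ℂ[X]) :
    (P : ℂ⟦X⟧) ∈ l2Ball (circleAverage (fun z => ‖P.eval z‖) 0 1) *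
      l2Ball (circleAverage (fun z => ‖P.eval z‖) 0 1) := by
  obtain ⟨g, h, hg, hh, hP, hgh⟩ := hasBalancedFactorization_eval P
  have hnorm_g {z : ℂ} (hz : z ∈ sphere (0 : ℂ) 1) : ‖g z‖ ^ 2 = ‖P.eval z‖ := by
    have hPz : P.eval z = g z * h z := hP (sphere_subset_closedBall hz)
    rw [hPz, norm_mul, ← hgh z hz, sq]
  have hnorm_h {z : ℂ} (hz : z ∈ sphere (0 : ℂ) 1) : ‖h z‖ ^ 2 = ‖P.eval z‖ := by
    rw [← hgh z hz, hnorm_g hz]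
  have haverage {k : ℂ → ℂ} (hk : ∀ {z}, z ∈ sphere (0 : ℂ) 1 → ‖k z‖ ^ 2 = ‖P.eval z‖) :
      circleAverage (fun z => ‖k z‖ ^ 2) 0 1 = circleAverage (fun z => ‖P.eval z‖) 0 1 :=
    Real.circleAverage_congr_sphere fun z hz => hk (by rwa [abs_one] at hz)
  obtain ⟨a, ha⟩ := exists_hasTaylorSeriesOnDisc hg.differentiableOn
  obtain ⟨b, hb⟩ := exists_hasTaylorSeriesOnDisc hh.differentiableOn
  have hab : a * b = (P : ℂ⟦X⟧) :=
    (ha.mul hb).unique ((hasTaylorSeriesOnDisc_eval P).congr (hP.mono ball_subset_closedBall))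
  exact ⟨a, haverage hnorm_g ▸ ha.mem_l2Ball_circleAverage hg,
    b, haverage hnorm_h ▸ hb.mem_l2Ball_circleAverage hh, hab⟩

theorem mem_l2Ball_mul_l2Ball_of_summable (hφ : Summable fun k => ‖φ.coeff k‖)
    (hf : ∀ z ∈ sphere (0 : ℂ) 1, HasSum (fun k => φ.coeff k * z ^ k) (f z)) :
    φ ∈ l2Ball (circleAverage (fun z => ‖f z‖) 0 1) *
      l2Ball (circleAverage (fun z => ‖f z‖) 0 1) :=
  mem_l2Ball_mul_l2Ball_of_tendsto (tendsto_circleAverage_comp_eval_trunc hφ hf continuous_norm)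
    (PowerSeries.WithPiTopology.tendsto_trunc_atTop ℂ φ)
    (.of_forall fun n => coe_mem_l2Ball_mul_l2Ball (φ.trunc n))

namespace HasTaylorSeriesOnDisc

theorem mem_l2Ball_mul_l2Ball (hf : HasTaylorSeriesOnDisc f φ)
    (hM : ∀ r ∈ Ioo (0 : ℝ) 1, circleAverage (fun z => ‖f z‖) 0 r ≤ M) :
    φ ∈ l2Ball M * l2Ball M := by
  refine mem_l2Ball_mul_l2Ball_of_tendsto tendsto_const_nhds
    (tendsto_rescale_ofReal_nhdsLT_one φ) ?_
  filter_upwards [Ioo_mem_nhdsLT zero_lt_one] with r hr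
  have hr' : ‖(r : ℂ)‖ < 1 := by simpa [abs_of_pos hr.1] using hr.2
  have hmem := mem_l2Ball_mul_l2Ball_of_summable (hf.summable_norm_coeff_rescale hr')
    fun z hz => hf.hasSum_rescale hr' hz
  have haverage := hM r hr
  rw [Real.circleAverage_eq_circleAverage_zero_one] at haverage
  simp only [add_zero] at haverage
  exact mul_subset_mul (l2Ball_mono haverage) (l2Ball_mono haverage) hmem

end HasTaylorSeriesOnDisc

end FactorizationOfTaylorSeries

section HardySpace

variable {f g : ℂ → ℂ} {φ : ℂ⟦X⟧} {M p r : ℝ}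

theorem hardyMean_eq_circleAverage (p : ℝ) (f : ℂ → ℂ) (r : ℝ) :
    hardyMean p f r = circleAverage (fun z => ‖f z‖ ^ p) 0 r ^ (1 / p) := by
  simp [hardyMean, circleAverage, circleMap]

theorem circleAverage_norm_rpow_nonneg (p : ℝ) (f : ℂ → ℂ) (r : ℝ) :
    0 ≤ circleAverage (fun z => ‖f z‖ ^ p) 0 r :=
  Real.circleAverage_nonneg_of_nonneg fun _ _ => Real.rpow_nonneg (norm_nonneg _) p

theorem hardyMean_le_iff (hp : 0 < p) (hM : 0 ≤ M) :
    hardyMean p f r ≤ M ↔ circleAverage (fun z => ‖f z‖ ^ p) 0 r ≤ M ^ p := by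
  rw [hardyMean_eq_circleAverage, one_div,
    Real.rpow_inv_le_iff_of_pos (circleAverage_norm_rpow_nonneg p f r) hM hp]

theorem hpNorm_nonneg (p : ℝ) (f : ℂ → ℂ) : 0 ≤ hpNorm p f :=
  Real.iSup_nonneg fun r => by
    rw [hardyMean_eq_circleAverage]
    exact Real.rpow_nonneg (circleAverage_norm_rpow_nonneg p f r) _

theorem MemHp.circleAverage_norm_rpow_le (hf : MemHp p f) (hp : 0 < p)
    (hr : r ∈ Ioo (0 : ℝ) 1) : circleAverage (fun z => ‖f z‖ ^ p) 0 r ≤ hpNorm p f ^ p :=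
  (hardyMean_le_iff hp (hpNorm_nonneg p f)).1 (le_ciSup hf.2 ⟨r, hr⟩)

theorem memHp_of_circleAverage_norm_rpow_le (hp : 0 < p) (hM : 0 ≤ M)
    (hf : DifferentiableOn ℂ f (ball 0 1))
    (h : ∀ r ∈ Ioo (0 : ℝ) 1, circleAverage (fun z => ‖f z‖ ^ p) 0 r ≤ M ^ p) : MemHp p f :=
  ⟨hf, M, forall_mem_range.2 fun r => (hardyMean_le_iff hp hM).2 (h r r.2)⟩

theorem hpNorm_le_of_circleAverage_norm_rpow_le (hp : 0 < p) (hM : 0 ≤ M)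
    (h : ∀ r ∈ Ioo (0 : ℝ) 1, circleAverage (fun z => ‖f z‖ ^ p) 0 r ≤ M ^ p) :
    hpNorm p f ≤ M :=
  Real.iSup_le (fun r => (hardyMean_le_iff hp hM).2 (h r r.2)) hM

namespace HasTaylorSeriesOnDisc

theorem circleAverage_norm_rpow_two_le_of_mem_l2Ball (hf : HasTaylorSeriesOnDisc f φ)
    (hφ : φ ∈ l2Ball M) (hr : r ∈ Ioo (0 : ℝ) 1) :
    circleAverage (fun z => ‖f z‖ ^ (2 : ℝ)) 0 r ≤ √M ^ (2 : ℝ) := by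
  simpa [Real.sq_sqrt (nonneg_of_mem_l2Ball hφ)] using
    hf.circleAverage_sq_norm_le_of_mem_l2Ball hφ ((abs_of_pos hr.1).trans_lt hr.2)

theorem memHp_two_of_mem_l2Ball (hf : HasTaylorSeriesOnDisc f φ) (hφ : φ ∈ l2Ball M) :
    MemHp 2 f :=
  memHp_of_circleAverage_norm_rpow_le two_pos M.sqrt_nonneg hf.differentiableOn
    fun _ => hf.circleAverage_norm_rpow_two_le_of_mem_l2Ball hφ

theorem sq_hpNorm_two_le_of_mem_l2Ball (hf : HasTaylorSeriesOnDisc f φ)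
    (hφ : φ ∈ l2Ball M) : hpNorm 2 f ^ 2 ≤ M :=
  (Real.le_sqrt (hpNorm_nonneg 2 f) (nonneg_of_mem_l2Ball hφ)).1 <|
    hpNorm_le_of_circleAverage_norm_rpow_le two_pos M.sqrt_nonneg
      fun _ => hf.circleAverage_norm_rpow_two_le_of_mem_l2Ball hφ

end HasTaylorSeriesOnDisc

theorem MemHp.exists_hasTaylorSeriesOnDisc_mul (hf : MemHp 1 f) : ∃ a ∈ l2Ball (hpNorm 1 f),
    ∃ b ∈ l2Ball (hpNorm 1 f), HasTaylorSeriesOnDisc f (a * b) := by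
  obtain ⟨φ, hφ⟩ := exists_hasTaylorSeriesOnDisc hf.1
  obtain ⟨a, ha, b, hb, rfl⟩ := hφ.mem_l2Ball_mul_l2Ball fun r hr => by
    simpa using hf.circleAverage_norm_rpow_le one_pos hr
  exact ⟨a, ha, b, hb, hφ⟩

theorem circleIntegrable_norm_pow_of_differentiableOn (hf : DifferentiableOn ℂ f (ball 0 1))
    (hr : |r| < 1) (n : ℕ) : CircleIntegrable (fun z => ‖f z‖ ^ n) 0 r := by
  have hcont : ContinuousOn f (sphere 0 |r|) := hf.continuousOn.mono (sphere_subset_ball hr)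
  exact (hcont.norm.pow n).circleIntegrable'

theorem hpNorm_one_le_of_eqOn_mul {h : ℂ → ℂ} (hg : MemHp 2 g) (hh : MemHp 2 h)
    (hf : ∀ z ∈ ball (0 : ℂ) 1, f z = g z * h z) :
    hpNorm 1 f ≤ (hpNorm 2 g ^ 2 + hpNorm 2 h ^ 2) / 2 := by
  refine hpNorm_le_of_circleAverage_norm_rpow_le one_pos (by positivity) fun r hr => ?_
  have hr' : |r| < 1 := (abs_of_pos hr.1).trans_lt hr.2
  have hg_int := circleIntegrable_norm_pow_of_differentiableOn hg.1 hr' 2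
  have hh_int := circleIntegrable_norm_pow_of_differentiableOn hh.1 hr' 2
  have hg_le := hg.circleAverage_norm_rpow_le two_pos hr
  have hh_le := hh.circleAverage_norm_rpow_le two_pos hr
  have hf_diff : DifferentiableOn ℂ f (ball 0 1) := (hg.1.mul hh.1).congr hf
  have hf_int := circleIntegrable_norm_pow_of_differentiableOn hf_diff hr' 1
  simp only [pow_one, Real.rpow_one, Real.rpow_ofNat] at hf_int hg_le hh_le ⊢
  calc
    circleAverage (fun z => ‖f z‖) 0 r
      ≤ circleAverage (fun z => (1 / 2 : ℝ) • (‖g z‖ ^ 2 + ‖h z‖ ^ 2)) 0 r := by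
        refine Real.circleAverage_mono hf_int ((hg_int.add hh_int).const_smul) fun z hz => ?_
        rw [hf z (sphere_subset_ball hr' hz), norm_mul, smul_eq_mul]
        linarith [two_mul_le_add_sq ‖g z‖ ‖h z‖]
    _ = (circleAverage (fun z => ‖g z‖ ^ 2) 0 r + circleAverage (fun z => ‖h z‖ ^ 2) 0 r) / 2 := by
        rw [Real.circleAverage_fun_smul, Real.circleAverage_fun_add hg_int hh_int, smul_eq_mul]
        ring
    _ ≤ (hpNorm 2 g ^ 2 + hpNorm 2 h ^ 2) / 2 := by gcongr

end HardySpace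

/-- Riesz factorization: every `f ∈ H¹` factors as `f = g * h` with
`g, h ∈ H²` and `‖g‖_{H²}² = ‖h‖_{H²}² = ‖f‖_{H¹}`. -/
theorem riesz_factorization (f : ℂ → ℂ) (hf : MemHp 1 f) :
    ∃ g h : ℂ → ℂ, MemHp 2 g ∧ MemHp 2 h ∧
      (∀ z ∈ ball (0:ℂ) 1, f z = g z * h z) ∧
      hpNorm 2 g ^ 2 = hpNorm 1 f ∧ hpNorm 2 h ^ 2 = hpNorm 1 f := by
  obtain ⟨a, ha, b, hb, hab⟩ := hf.exists_hasTaylorSeriesOnDisc_mul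
  obtain ⟨g, hg⟩ := exists_hasTaylorSeriesOnDisc_of_mem_l2Ball ha
  obtain ⟨h, hh⟩ := exists_hasTaylorSeriesOnDisc_of_mem_l2Ball hb
  have hfgh : ∀ z ∈ ball (0 : ℂ) 1, f z = g z * h z :=
    fun z hz => (hab z hz).unique (hg.mul hh z hz)
  have hg_le : hpNorm 2 g ^ 2 ≤ hpNorm 1 f := hg.sq_hpNorm_two_le_of_mem_l2Ball ha
  have hh_le : hpNorm 2 h ^ 2 ≤ hpNorm 1 f := hh.sq_hpNorm_two_le_of_mem_l2Ball hb
  have hg_mem : MemHp 2 g := hg.memHp_two_of_mem_l2Ball ha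
  have hh_mem : MemHp 2 h := hh.memHp_two_of_mem_l2Ball hb
  have hf_le := hpNorm_one_le_of_eqOn_mul hg_mem hh_mem hfgh
  exact ⟨g, h, hg_mem, hh_mem, hfgh, by linarith, by linarith⟩
end

section
/- (Calderón's theorem, one direction) Let f, g be measurable functions on a σ-finite measure space with ∫₀^t g*(s) ds ≤ ∫₀^t f*(s) ds for all t > 0 (i.e., K(t,g) ≤ K(t,f) for the couple (L¹,L^∞)). Then there exists a linear operator T, simultaneously contractive on L¹ and on L^∞, with Tf = g. Conversely, if T is bounded on L¹ and on L^∞ with norms ≤ 1, then ∫₀^t (Tf)*(s) ds ≤ ∫₀^t f*(s) ds for all t. -/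
open MeasureTheory
open scoped ENNReal

/-- The decreasing rearrangement `f*(s) = inf {λ : μ{|f| > λ} ≤ s}`. -/
noncomputable def decRearr {α : Type*} [MeasurableSpace α] (μ : Measure α)
    (f : α → ℝ) (s : ℝ) : ℝ≥0∞ :=
  sInf {l : ℝ≥0∞ | μ {x | l < (‖f x‖₊ : ℝ≥0∞)} ≤ ENNReal.ofReal s}

open Set Filter
open scoped Topology NNReal

/-!
The integral `∫₀ᵗ f*` is the minimum of `‖a‖₁ + t ‖b‖_∞` over the decompositions `f = a + b`,
attained by truncating `f` at height `f*(t)`. A contraction of both spaces maps decompositions of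
`f` to decompositions of `T f` of no larger cost, which gives the converse.

For the existence of `T`, an operator contractive on both spaces is encoded by the bilinear form
`(u, v) ↦ ∫ (T u) v`, bounded by `1` on `L¹ × L^∞` and on `L^∞ × L¹`. Slicing `|v|` into thin
horizontal layers and pairing each layer with a matching slice of `f` gives forms showing that
`∫ |v g| ≤ sup_β |β (f, v)|` whenever `∫₀ᵗ g* ≤ ∫₀ᵗ f*`. By Hahn–Banach some generalised mean of the
numbers `β (f, v)` over all admissible `β` equals `∫ v g` for every bounded integrable `v`; the same
mean of the forms `β` is again such a form, and the operator representing it sends `f` to `g`.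
If `f ∉ L¹ + L^∞`, a linear functional killing `L¹ + L^∞` but not `f` gives a degenerate `T`.
-/

section Rearrangement

variable {α : Type*} [MeasurableSpace α] {μ : Measure α} {f : α → ℝ}

lemma lt_decRearr_iff {s : ℝ} {l : ℝ≥0∞} :
    l < decRearr μ f s ↔ ENNReal.ofReal s < μ {x | l < ‖f x‖ₑ} := by
  refine ⟨fun h => lt_of_not_ge fun hl => h.not_ge (sInf_le hl), fun h => ?_⟩
  have hl : l < ⊤ := lt_top_iff_ne_top.2 fun hl => by simp [hl] at h
  obtain ⟨u, hu_anti, hu_gt, hu_lim⟩ := exists_seq_strictAnti_tendsto' hl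
  have hset : {x | l < ‖f x‖ₑ} = ⋃ n, {x | u n < ‖f x‖ₑ} := by
    ext x
    simp only [mem_ofPred_eq, mem_iUnion]
    exact ⟨fun hx => (hu_lim.eventually_lt_const hx).exists, fun ⟨n, hn⟩ => (hu_gt n).1.trans hn⟩
  have hmono : Monotone fun n => {x | u n < ‖f x‖ₑ} :=
    fun m n hmn x hx => (hu_anti.antitone hmn).trans_lt hx
  rw [hset, hmono.measure_iUnion, lt_iSup_iff] at h
  obtain ⟨n, hn⟩ := h
  refine (hu_gt n).1.trans_le (le_sInf fun b hb => ?_)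
  by_contra! hbn
  exact hn.not_ge ((measure_mono fun x hx => hbn.trans hx).trans hb)

lemma decRearr_antitone : Antitone (decRearr μ f) := fun _ _ hst =>
  sInf_le_sInf fun _ hl => hl.trans (ENNReal.ofReal_le_ofReal hst)

lemma volume_setOf_ofReal_lt_inter_Ioi (a : ℝ≥0∞) :
    volume ({s : ℝ | ENNReal.ofReal s < a} ∩ Ioi 0) = a := by
  rcases eq_or_ne a ⊤ with rfl | ha
  · simp
  · have : {s : ℝ | ENNReal.ofReal s < a} ∩ Ioi 0 = Ioo 0 a.toReal := by
      ext s
      simp only [mem_inter_iff, mem_ofPred_eq, mem_Ioi, mem_Ioo, and_comm (a := 0 < s)]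
      exact and_congr_left fun hs => ENNReal.ofReal_lt_iff_lt_toReal hs.le ha
    rw [this, Real.volume_Ioo, sub_zero, ENNReal.ofReal_toReal ha]

lemma lintegral_eq_lintegral_measure_ofReal_lt [SFinite μ] {φ : α → ℝ≥0∞} (hφ : Measurable φ) :
    ∫⁻ x, φ x ∂μ = ∫⁻ l in Ioi (0 : ℝ), μ {x | ENNReal.ofReal l < φ x} := by
  have hm : MeasurableSet {p : α × ℝ | ENNReal.ofReal p.2 < φ p.1} := by measurability
  calc ∫⁻ x, φ x ∂μ
      = ∫⁻ x, volume.restrict (Ioi 0) {l | ENNReal.ofReal l < φ x} ∂μ := by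
        refine lintegral_congr fun x => ?_
        rw [Measure.restrict_apply (by measurability), volume_setOf_ofReal_lt_inter_Ioi]
    _ = (μ.prod (volume.restrict (Ioi 0))) {p : α × ℝ | ENNReal.ofReal p.2 < φ p.1} :=
        (Measure.prod_apply hm).symm
    _ = _ := Measure.prod_apply_symm hm

lemma lintegral_enorm_tsub_eq_lintegral_decRearr_tsub [SFinite μ] (hf : Measurable f)
    (c : ℝ≥0∞) :
    ∫⁻ x, (‖f x‖ₑ - c) ∂μ = ∫⁻ s in Ioi (0 : ℝ), (decRearr μ f s - c) := by
  rw [lintegral_eq_lintegral_measure_ofReal_lt (hf.enorm.sub_const c),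
    lintegral_eq_lintegral_measure_ofReal_lt (decRearr_antitone.measurable.sub_const c)]
  refine lintegral_congr fun l => ?_
  simp only [lt_tsub_iff_right, lt_decRearr_iff]
  rw [Measure.restrict_apply (by measurability), volume_setOf_ofReal_lt_inter_Ioi]

/-- The Peetre K-functional `K(t, f)` of the couple `(L¹, L^∞)`, encoded by its closed form
`∫₀ᵗ f*`. -/
noncomputable def kFunctional (μ : Measure α) (f : α → ℝ) (t : ℝ) : ℝ≥0∞ :=
  ∫⁻ s in Ioc (0 : ℝ) t, decRearr μ f s

lemma kFunctional_le_lintegral_tsub_add [SFinite μ] (hf : Measurable f) (t : ℝ) (c : ℝ≥0∞) :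
    kFunctional μ f t ≤ ∫⁻ x, (‖f x‖ₑ - c) ∂μ + ENNReal.ofReal t * c :=
  calc ∫⁻ s in Ioc (0 : ℝ) t, decRearr μ f s
      ≤ ∫⁻ s in Ioc (0 : ℝ) t, (decRearr μ f s - c + c) :=
        lintegral_mono fun _ => le_tsub_add
    _ = (∫⁻ s in Ioc (0 : ℝ) t, (decRearr μ f s - c)) + ENNReal.ofReal t * c := by
        rw [lintegral_add_right _ measurable_const, setLIntegral_const, Real.volume_Ioc, sub_zero,
          mul_comm]
    _ ≤ _ := by
        rw [lintegral_enorm_tsub_eq_lintegral_decRearr_tsub hf]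
        gcongr
        exact Ioc_subset_Ioi_self

lemma kFunctional_eq_lintegral_tsub_add [SFinite μ] (hf : Measurable f) (t : ℝ) :
    kFunctional μ f t =
      ∫⁻ x, (‖f x‖ₑ - decRearr μ f t) ∂μ + ENNReal.ofReal t * decRearr μ f t := by
  have hvanish : ∫⁻ s in Ioi (0 : ℝ), (decRearr μ f s - decRearr μ f t) =
      ∫⁻ s in Ioc (0 : ℝ) t, (decRearr μ f s - decRearr μ f t) := by
    rw [← setLIntegral_eq_of_support_subset (s := Iic t),
      Measure.restrict_restrict measurableSet_Iic, inter_comm, Ioi_inter_Iic]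
    intro s hs
    by_contra hst
    exact hs (tsub_eq_zero_of_le (decRearr_antitone (not_le.1 hst).le))
  calc kFunctional μ f t
      = ∫⁻ s in Ioc (0 : ℝ) t, (decRearr μ f s - decRearr μ f t + decRearr μ f t) :=
        setLIntegral_congr_fun measurableSet_Ioc fun s hs =>
          (tsub_add_cancel_of_le (decRearr_antitone hs.2)).symm
    _ = _ := by
        rw [lintegral_add_right _ measurable_const, setLIntegral_const, Real.volume_Ioc, sub_zero,
          mul_comm, ← hvanish, ← lintegral_enorm_tsub_eq_lintegral_decRearr_tsub hf]

lemma setLIntegral_enorm_le_kFunctional [SFinite μ] (hf : Measurable f) {E : Set α}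
    (hE : μ E ≠ ⊤) : ∫⁻ x in E, ‖f x‖ₑ ∂μ ≤ kFunctional μ f (μ.real E) := by
  rw [kFunctional_eq_lintegral_tsub_add hf]
  set c := decRearr μ f (μ.real E)
  calc ∫⁻ x in E, ‖f x‖ₑ ∂μ
      ≤ ∫⁻ x in E, (‖f x‖ₑ - c + c) ∂μ := lintegral_mono fun _ => le_tsub_add
    _ = (∫⁻ x in E, (‖f x‖ₑ - c) ∂μ) + ENNReal.ofReal (μ.real E) * c := by
        rw [lintegral_add_right _ measurable_const, setLIntegral_const, ofReal_measureReal hE,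
          mul_comm]
    _ ≤ _ := by gcongr; exact Measure.restrict_le_self

lemma kFunctional_le_eLpNorm_add [SFinite μ] (hf : Measurable f) {a b : α → ℝ}
    (hab : f =ᵐ[μ] a + b) (t : ℝ) :
    kFunctional μ f t ≤ eLpNorm a 1 μ + ENNReal.ofReal t * eLpNorm b ⊤ μ := by
  refine (kFunctional_le_lintegral_tsub_add hf t (eLpNorm b ⊤ μ)).trans ?_
  rw [eLpNorm_one_eq_lintegral_enorm]
  gcongr ?_ + _
  refine lintegral_mono_ae ?_
  filter_upwards [hab, ae_le_eLpNormEssSup (f := b) (μ := μ)] with x hx hbx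
  rw [tsub_le_iff_right, hx, eLpNorm_exponent_top]
  exact (enorm_add_le _ _).trans (by gcongr)

lemma decRearr_mono_measure {ν : Measure α} (h : μ ≤ ν) (s : ℝ) : decRearr μ f s ≤ decRearr ν f s :=
  sInf_le_sInf fun _ hl => (h _).trans hl

lemma kFunctional_mono_measure {ν : Measure α} (h : μ ≤ ν) (t : ℝ) :
    kFunctional μ f t ≤ kFunctional ν f t :=
  lintegral_mono fun s => decRearr_mono_measure h s

lemma kFunctional_mono : Monotone (kFunctional μ f) := fun _ _ hst =>
  lintegral_mono_set (Ioc_subset_Ioc_right hst)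

lemma decRearr_eq_iSup_restrict_spanningSets [SigmaFinite μ] (s : ℝ) :
    decRearr μ f s = ⨆ k, decRearr (μ.restrict (spanningSets μ k)) f s := by
  refine eq_of_forall_lt_iff fun l => ?_
  simp only [lt_iSup_iff, lt_decRearr_iff,
    ← Measure.iSup_restrict_spanningSets (μ := μ) {x | l < ‖f x‖ₑ}]

lemma kFunctional_eq_iSup_restrict_spanningSets [SigmaFinite μ] (t : ℝ) :
    kFunctional μ f t = ⨆ k, kFunctional (μ.restrict (spanningSets μ k)) f t := by
  simp only [kFunctional, decRearr_eq_iSup_restrict_spanningSets (μ := μ)]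
  refine lintegral_iSup (fun k => decRearr_antitone.measurable) fun j k hjk s => ?_
  exact decRearr_mono_measure (Measure.restrict_mono (monotone_spanningSets μ hjk) le_rfl) s

lemma enorm_sub_max_neg_min {L : ℝ} (hL : 0 ≤ L) (y : ℝ) :
    ‖y - max (-L) (min L y)‖ₑ = ‖y‖ₑ - ENNReal.ofReal L := by
  rw [← ofReal_norm, ← ofReal_norm, ← ENNReal.ofReal_sub _ hL, Real.norm_eq_abs, Real.norm_eq_abs,
    ← ENNReal.toReal_eq_toReal_iff' ENNReal.ofReal_ne_top ENNReal.ofReal_ne_top,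
    ENNReal.toReal_ofReal', ENNReal.toReal_ofReal']
  grind

lemma exists_eq_add_eLpNorm_le_kFunctional [SFinite μ] (f : α →ₘ[μ] ℝ) {t : ℝ} (ht : 0 < t) :
    ∃ a b : α →ₘ[μ] ℝ, f = a + b ∧
      eLpNorm a 1 μ + ENNReal.ofReal t * eLpNorm b ⊤ μ ≤ kFunctional μ f t := by
  rw [kFunctional_eq_lintegral_tsub_add f.measurable]
  rcases eq_or_ne (decRearr μ f t) ⊤ with htop | htop
  · exact ⟨f, 0, (add_zero f).symm, by simp [htop, ENNReal.mul_top, ht]⟩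
  set L := (decRearr μ f t).toReal
  have hL : ENNReal.ofReal L = decRearr μ f t := ENNReal.ofReal_toReal htop
  have hcont : Continuous fun y : ℝ => max (-L) (min L y) := by fun_prop
  set b : α →ₘ[μ] ℝ := AEEqFun.comp _ hcont f
  have hb : b =ᵐ[μ] fun x => max (-L) (min L (f x)) := AEEqFun.coeFn_comp _ _ _
  refine ⟨f - b, b, (sub_add_cancel f b).symm, add_le_add (le_of_eq ?_) ?_⟩
  · rw [eLpNorm_one_eq_lintegral_enorm]
    refine lintegral_congr_ae ?_
    filter_upwards [AEEqFun.coeFn_sub f b, hb] with x hx hbx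
    rw [hx, Pi.sub_apply, hbx, enorm_sub_max_neg_min ENNReal.toReal_nonneg, hL]
  · gcongr
    rw [← hL, eLpNorm_exponent_top]
    refine eLpNormEssSup_le_of_ae_bound ?_
    filter_upwards [hb] with x hx
    rw [hx, Real.norm_eq_abs, abs_le]
    have : 0 ≤ L := ENNReal.toReal_nonneg
    exact ⟨le_max_left _ _, max_le (by linarith) (min_le_left _ _)⟩

lemma kFunctional_map_le [SFinite μ] (T : (α →ₘ[μ] ℝ) →ₗ[ℝ] (α →ₘ[μ] ℝ))
    (hT_one : ∀ u, eLpNorm (T u) 1 μ ≤ eLpNorm u 1 μ)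
    (hT_top : ∀ u, eLpNorm (T u) ⊤ μ ≤ eLpNorm u ⊤ μ) (f : α →ₘ[μ] ℝ) {t : ℝ} (ht : 0 < t) :
    kFunctional μ (T f) t ≤ kFunctional μ f t := by
  obtain ⟨a, b, hab, hle⟩ := exists_eq_add_eLpNorm_le_kFunctional f ht
  have hT : T f =ᵐ[μ] T a + T b := by
    rw [hab, map_add]
    exact AEEqFun.coeFn_add _ _
  calc kFunctional μ (T f) t
      ≤ eLpNorm (T a) 1 μ + ENNReal.ofReal t * eLpNorm (T b) ⊤ μ :=
        kFunctional_le_eLpNorm_add (T f).measurable hT t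
    _ ≤ eLpNorm a 1 μ + ENNReal.ofReal t * eLpNorm b ⊤ μ := by
        gcongr
        exacts [hT_one a, hT_top b]
    _ ≤ kFunctional μ f t := hle

end Rearrangement

section OptimalWeight

variable {α : Type*} [MeasurableSpace α] {ν : Measure α} {f : α → ℝ}

lemma measure_decRearr_lt_le (t : ℝ) :
    ν {x | decRearr ν f t < ‖f x‖ₑ} ≤ ENNReal.ofReal t :=
  not_lt.1 fun h => (lt_decRearr_iff.2 h).false

lemma min_ofReal_le_measure_decRearr_le [IsFiniteMeasure ν] (hf : Measurable f) (t : ℝ) :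
    min (ENNReal.ofReal t) (ν univ) ≤ ν {x | decRearr ν f t ≤ ‖f x‖ₑ} := by
  rcases eq_or_ne (decRearr ν f t) 0 with h0 | h0
  · simp [h0]
  obtain ⟨u, hu_mono, hu_lt, hu_lim⟩ := exists_seq_strictMono_tendsto' (pos_iff_ne_zero.2 h0)
  have hset : {x | decRearr ν f t ≤ ‖f x‖ₑ} = ⋂ n, {x | u n < ‖f x‖ₑ} := by
    ext x
    simp only [mem_ofPred_eq, mem_iInter]
    exact ⟨fun h n => (hu_lt n).2.trans_le h, fun h => le_of_tendsto' hu_lim fun n => (h n).le⟩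
  have hanti : Antitone fun n => {x | u n < ‖f x‖ₑ} :=
    fun m n hmn x hx => (hu_mono.monotone hmn).trans_lt hx
  rw [hset, hanti.measure_iInter
    (fun n => (measurableSet_lt measurable_const hf.enorm).nullMeasurableSet)
    ⟨0, measure_ne_top _ _⟩]
  exact (min_le_left _ _).trans (le_iInf fun n => (lt_decRearr_iff.1 (hu_lt n).2).le)

/-- The weight `W` with `0 ≤ W ≤ 1` and mass `t` (or `ν univ`, if that is smaller) which
maximises `∫ |f| W`, so that `∫ |f| W = K(t, f)`: it fills up the superlevel set of `|f|` at height
`f*(t)` and spreads the remaining mass evenly over the level set. -/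
noncomputable def optimalWeight (ν : Measure α) (f : α → ℝ) (t : ℝ) (x : α) : ℝ≥0∞ :=
  {y | decRearr ν f t < ‖f y‖ₑ}.indicator 1 x +
    {y | ‖f y‖ₑ = decRearr ν f t}.indicator
      (fun _ => min 1 ((ENNReal.ofReal t - ν {y | decRearr ν f t < ‖f y‖ₑ}) /
        ν {y | ‖f y‖ₑ = decRearr ν f t})) x

lemma measurable_optimalWeight (hf : Measurable f) (t : ℝ) :
    Measurable (optimalWeight ν f t) :=
  (measurable_one.indicator (measurableSet_lt measurable_const hf.enorm)).add
    (measurable_const.indicator (measurableSet_eq_fun hf.enorm measurable_const))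

lemma optimalWeight_eq_one {t : ℝ} {x : α} (h : decRearr ν f t < ‖f x‖ₑ) :
    optimalWeight ν f t x = 1 := by
  simp [optimalWeight, h, h.ne']

lemma optimalWeight_eq_zero {t : ℝ} {x : α} (h : ‖f x‖ₑ < decRearr ν f t) :
    optimalWeight ν f t x = 0 := by
  simp [optimalWeight, h.not_gt, h.ne]

lemma optimalWeight_le_one (t : ℝ) (x : α) : optimalWeight ν f t x ≤ 1 := by
  rcases lt_trichotomy (decRearr ν f t) ‖f x‖ₑ with h | h | h
  · exact (optimalWeight_eq_one h).le
  · simp [optimalWeight, h]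
  · simp [optimalWeight_eq_zero h]

lemma optimalWeight_mono (x : α) : Monotone fun t => optimalWeight ν f t x := by
  intro s t hst
  rcases (decRearr_antitone (μ := ν) (f := f) hst).lt_or_eq with hlt | heq
  · rcases lt_or_ge (decRearr ν f t) ‖f x‖ₑ with h | h
    · exact (optimalWeight_le_one s x).trans_eq (optimalWeight_eq_one h).symm
    · simp [optimalWeight_eq_zero (h.trans_lt hlt)]
  · simp only [optimalWeight, heq]
    gcongr

lemma lintegral_optimalWeight [IsFiniteMeasure ν] (hf : Measurable f) (t : ℝ) :
    ∫⁻ x, optimalWeight ν f t x ∂ν = min (ENNReal.ofReal t) (ν univ) := by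
  have hm_lt : MeasurableSet {x | decRearr ν f t < ‖f x‖ₑ} :=
    measurableSet_lt measurable_const hf.enorm
  have hm_eq : MeasurableSet {x | ‖f x‖ₑ = decRearr ν f t} :=
    measurableSet_eq_fun hf.enorm measurable_const
  have hsplit : ν {x | decRearr ν f t ≤ ‖f x‖ₑ} =
      ν {x | decRearr ν f t < ‖f x‖ₑ} + ν {x | ‖f x‖ₑ = decRearr ν f t} := by
    rw [← measure_union (disjoint_left.2 fun x hx hx' => hx.ne' hx') hm_eq]
    congr 1 with x
    simp [le_iff_lt_or_eq, eq_comm]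
  have hmass : ∫⁻ x, optimalWeight ν f t x ∂ν =
      min (ν {x | decRearr ν f t ≤ ‖f x‖ₑ}) (ENNReal.ofReal t) := by
    simp only [optimalWeight]
    rw [lintegral_add_left (measurable_one.indicator hm_lt), lintegral_indicator_one hm_lt,
      lintegral_indicator_const hm_eq, hsplit]
    rcases eq_or_ne (ν {x | ‖f x‖ₑ = decRearr ν f t}) 0 with h0 | h0
    · simp [h0, measure_decRearr_lt_le]
    · rw [min_mul_of_nonneg _ _ zero_le, one_mul, ENNReal.div_mul_cancel h0 (measure_ne_top _ _),
        ← min_add_add_left, add_tsub_cancel_of_le (measure_decRearr_lt_le t)]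
  rw [hmass, min_comm]
  refine le_antisymm (min_le_min_left _ (measure_mono (subset_univ _)))
    (le_min (min_le_left _ _) (min_ofReal_le_measure_decRearr_le hf t))

lemma lintegral_enorm_mul_optimalWeight [IsFiniteMeasure ν] (hf : Measurable f) (t : ℝ) :
    ∫⁻ x, ‖f x‖ₑ * optimalWeight ν f t x ∂ν = kFunctional ν f t := by
  have hpoint (x : α) : ‖f x‖ₑ * optimalWeight ν f t x =
      (‖f x‖ₑ - decRearr ν f t) + decRearr ν f t * optimalWeight ν f t x := by
    rcases lt_trichotomy (decRearr ν f t) ‖f x‖ₑ with h | h | h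
    · simp [optimalWeight_eq_one h, tsub_add_cancel_of_le h.le]
    · simp [← h]
    · simp [optimalWeight_eq_zero h, tsub_eq_zero_of_le h.le]
  have hmass : decRearr ν f t * min (ENNReal.ofReal t) (ν univ) =
      decRearr ν f t * ENNReal.ofReal t := by
    rcases le_or_gt (ENNReal.ofReal t) (ν univ) with h | h
    · rw [min_eq_left h]
    · have : decRearr ν f t = 0 := le_antisymm
        (sInf_le (show ν _ ≤ _ from (measure_mono (subset_univ _)).trans h.le)) zero_le
      simp [this]
  simp only [hpoint]
  rw [lintegral_add_left (hf.enorm.sub_const _),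
    lintegral_const_mul _ (measurable_optimalWeight hf t), lintegral_optimalWeight hf, hmass,
    kFunctional_eq_lintegral_tsub_add hf, mul_comm]

end OptimalWeight

section AdmissibleForms

variable {α : Type*} [MeasurableSpace α] {μ : Measure α}

lemma exists_linearMap_eq_integral (μ : Measure α) : ∃ I : (α →ₘ[μ] ℝ) →ₗ[ℝ] ℝ,
    ∀ u : α →ₘ[μ] ℝ, Integrable u μ → I u = ∫ x, u x ∂μ := by
  have hint (u : Lp.LpSubmodule ℝ ℝ 1 μ) : Integrable (u : α →ₘ[μ] ℝ) μ :=
    memLp_one_iff_integrable.1 (Lp.mem_Lp_iff_memLp.1 u.2)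
  let I₁ : Lp.LpSubmodule ℝ ℝ 1 μ →ₗ[ℝ] ℝ :=
    { toFun := fun u => ∫ x, (u : α →ₘ[μ] ℝ) x ∂μ
      map_add' := fun u v => by
        rw [← integral_add (hint u) (hint v)]
        exact integral_congr_ae (AEEqFun.coeFn_add _ _)
      map_smul' := fun c u => by
        rw [RingHom.id_apply, smul_eq_mul, ← integral_const_mul]
        exact integral_congr_ae (AEEqFun.coeFn_smul _ _) }
  obtain ⟨I, hI⟩ := I₁.exists_extend
  exact ⟨I, fun u hu =>
    LinearMap.congr_fun hI ⟨u, Lp.mem_Lp_iff_memLp.2 (memLp_one_iff_integrable.2 hu)⟩⟩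

/-- A linear extension of the integral to all a.e.-classes of measurable functions; its values on
non-integrable functions are arbitrary. -/
noncomputable def integralExtension (μ : Measure α) : (α →ₘ[μ] ℝ) →ₗ[ℝ] ℝ :=
  (exists_linearMap_eq_integral μ).choose

lemma integralExtension_eq_integral {u : α →ₘ[μ] ℝ} (hu : Integrable u μ) :
    integralExtension μ u = ∫ x, u x ∂μ :=
  (exists_linearMap_eq_integral μ).choose_spec u hu

lemma enorm_integralExtension_le (u : α →ₘ[μ] ℝ) :
    ‖integralExtension μ u‖ₑ ≤ eLpNorm u 1 μ := by
  by_cases hu : Integrable u μ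
  · rw [integralExtension_eq_integral hu, eLpNorm_one_eq_lintegral_enorm]
    exact enorm_integral_le_lintegral_enorm _
  · have : eLpNorm u 1 μ = ⊤ := by
      by_contra h
      exact hu (memLp_one_iff_integrable.1 ⟨u.aestronglyMeasurable, lt_top_iff_ne_top.2 h⟩)
    simp [this]

/-- Bilinear forms bounded by `1` on `L¹ × L^∞` and on `L^∞ × L¹`; they stand for the forms
`(u, v) ↦ ∫ (T u) v` of operators `T` contractive on `L¹` and on `L^∞`. -/
structure IsAdmissible (β : (α →ₘ[μ] ℝ) →ₗ[ℝ] (α →ₘ[μ] ℝ) →ₗ[ℝ] ℝ) : Prop where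
  enorm_le_one_top : ∀ u v, ‖β u v‖ₑ ≤ eLpNorm u 1 μ * eLpNorm v ⊤ μ
  enorm_le_top_one : ∀ u v, ‖β u v‖ₑ ≤ eLpNorm u ⊤ μ * eLpNorm v 1 μ

/-- Pointwise multiplication by `ρ`, as a linear map on a.e.-classes. -/
noncomputable def mulRightLinear (ρ : α →ₘ[μ] ℝ) : (α →ₘ[μ] ℝ) →ₗ[ℝ] (α →ₘ[μ] ℝ) where
  toFun u := u * ρ
  map_add' u v := by
    refine AEEqFun.induction_on₃ u v ρ fun u _ v _ ρ _ => ?_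
    simp only [AEEqFun.mk_add_mk, AEEqFun.mk_mul_mk, add_mul]
  map_smul' c u := by
    refine AEEqFun.induction_on₂ u ρ fun u _ ρ _ => ?_
    simp only [AEEqFun.smul_mk, AEEqFun.mk_mul_mk, smul_mul_assoc, RingHom.id_apply]

lemma mulRightLinear_apply (ρ u : α →ₘ[μ] ℝ) : mulRightLinear ρ u = u * ρ := rfl

/-- The form `∑ⱼ cⱼ⁻¹ (∫ u ρⱼ) (∫ v σⱼ)`; terms with `cⱼ = 0` vanish, since `0⁻¹ = 0`. -/
noncomputable def finiteRankForm {ι : Type*} (s : Finset ι) (c : ι → ℝ≥0)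
    (ρ σ : ι → α →ₘ[μ] ℝ) : (α →ₘ[μ] ℝ) →ₗ[ℝ] (α →ₘ[μ] ℝ) →ₗ[ℝ] ℝ :=
  ∑ j ∈ s, (c j : ℝ)⁻¹ • (integralExtension μ ∘ₗ mulRightLinear (ρ j)).smulRight
    (integralExtension μ ∘ₗ mulRightLinear (σ j))

lemma finiteRankForm_apply {ι : Type*} (s : Finset ι) (c : ι → ℝ≥0) (ρ σ : ι → α →ₘ[μ] ℝ)
    (u v : α →ₘ[μ] ℝ) : finiteRankForm s c ρ σ u v =
      ∑ j ∈ s, (c j : ℝ)⁻¹ * (integralExtension μ (u * ρ j) * integralExtension μ (v * σ j)) := by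
  simp [finiteRankForm, LinearMap.sum_apply, mulRightLinear_apply]

lemma eLpNorm_coeFn_mul_le {p q r : ℝ≥0∞} [ENNReal.HolderTriple p q r] (u v : α →ₘ[μ] ℝ) :
    eLpNorm (u * v : α →ₘ[μ] ℝ) r μ ≤ eLpNorm u p μ * eLpNorm v q μ := by
  rw [eLpNorm_congr_ae (AEEqFun.coeFn_mul u v)]
  exact eLpNorm_smul_le_mul_eLpNorm (φ := (u : α → ℝ)) v.aestronglyMeasurable
    u.aestronglyMeasurable

lemma sum_eLpNorm_mul_le {ι : Type*} {s : Finset ι} {ρ : ι → α →ₘ[μ] ℝ}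
    (hρ : ∀ᵐ x ∂μ, ∑ j ∈ s, ‖ρ j x‖ₑ ≤ 1) (u : α →ₘ[μ] ℝ) :
    ∑ j ∈ s, eLpNorm (u * ρ j : α →ₘ[μ] ℝ) 1 μ ≤ eLpNorm u 1 μ := by
  simp only [eLpNorm_congr_ae (AEEqFun.coeFn_mul u _), eLpNorm_one_eq_lintegral_enorm,
    Pi.mul_apply, enorm_mul]
  rw [← lintegral_finsetSum _ fun j _ => by fun_prop]
  refine lintegral_mono_ae ?_
  filter_upwards [hρ] with x hx
  rw [← Finset.mul_sum]
  exact mul_le_of_le_one_right zero_le hx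

lemma sum_enorm_finiteRankForm_term_le {ι : Type*} {s : Finset ι} {c : ι → ℝ≥0}
    {ρ σ : ι → α →ₘ[μ] ℝ} (hρ : ∀ᵐ x ∂μ, ∑ j ∈ s, ‖ρ j x‖ₑ ≤ 1)
    (hσ : ∀ j ∈ s, eLpNorm (σ j) 1 μ ≤ c j) (u v : α →ₘ[μ] ℝ) :
    ∑ j ∈ s, ‖(c j : ℝ)⁻¹‖ₑ * (‖integralExtension μ (u * ρ j)‖ₑ * ‖integralExtension μ (v * σ j)‖ₑ)
      ≤ eLpNorm u 1 μ * eLpNorm v ⊤ μ := by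
  calc _ ≤ ∑ j ∈ s, eLpNorm (u * ρ j : α →ₘ[μ] ℝ) 1 μ * eLpNorm v ⊤ μ := by
        refine Finset.sum_le_sum fun j hj => ?_
        have hσj : ‖integralExtension μ (v * σ j)‖ₑ ≤ eLpNorm v ⊤ μ * c j :=
          (enorm_integralExtension_le _).trans
            ((eLpNorm_coeFn_mul_le v (σ j)).trans (by gcongr; exact hσ j hj))
        have hc : ‖(c j : ℝ)⁻¹‖ₑ * c j ≤ 1 := by
          rcases eq_or_ne (c j) 0 with h | h
          · simp [h]
          · rw [enorm_inv (by simpa using h), NNReal.enorm_eq]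
            exact (ENNReal.inv_mul_cancel (by simpa using h) (by simp)).le
        calc _ ≤ ‖(c j : ℝ)⁻¹‖ₑ * (eLpNorm (u * ρ j : α →ₘ[μ] ℝ) 1 μ * (eLpNorm v ⊤ μ * c j)) := by
              gcongr
              exact enorm_integralExtension_le _
          _ = (‖(c j : ℝ)⁻¹‖ₑ * c j) * (eLpNorm (u * ρ j : α →ₘ[μ] ℝ) 1 μ * eLpNorm v ⊤ μ) := by
              ring
          _ ≤ _ := mul_le_of_le_one_left zero_le hc
    _ ≤ _ := by
        rw [← Finset.sum_mul]
        gcongr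
        exact sum_eLpNorm_mul_le hρ u

lemma isAdmissible_finiteRankForm {ι : Type*} {s : Finset ι} {c : ι → ℝ≥0}
    {ρ σ : ι → α →ₘ[μ] ℝ} (hρ : ∀ᵐ x ∂μ, ∑ j ∈ s, ‖ρ j x‖ₑ ≤ 1)
    (hσ : ∀ᵐ x ∂μ, ∑ j ∈ s, ‖σ j x‖ₑ ≤ 1) (hρc : ∀ j ∈ s, eLpNorm (ρ j) 1 μ ≤ c j)
    (hσc : ∀ j ∈ s, eLpNorm (σ j) 1 μ ≤ c j) : IsAdmissible (finiteRankForm s c ρ σ) := by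
  have hle (u v : α →ₘ[μ] ℝ) : ‖finiteRankForm s c ρ σ u v‖ₑ ≤ ∑ j ∈ s, ‖(c j : ℝ)⁻¹‖ₑ *
      (‖integralExtension μ (u * ρ j)‖ₑ * ‖integralExtension μ (v * σ j)‖ₑ) := by
    rw [finiteRankForm_apply]
    exact (enorm_sum_le _ _).trans_eq (by simp only [enorm_mul])
  refine ⟨fun u v => (hle u v).trans (sum_enorm_finiteRankForm_term_le hρ hσc u v), fun u v => ?_⟩
  rw [mul_comm]
  refine (hle u v).trans (le_trans (le_of_eq ?_) (sum_enorm_finiteRankForm_term_le hσ hρc v u))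
  simp only [mul_comm]

end AdmissibleForms

section WeightIncrement

variable {α : Type*} [MeasurableSpace α] {μ ν : Measure α} {f : α → ℝ}

lemma measurable_coe_sign : Measurable fun r : ℝ => ((SignType.sign r : SignType) : ℝ) := by
  simp only [sign_apply, apply_ite (SignType.cast : SignType → ℝ)]
  exact Measurable.ite measurableSet_Ioi measurable_const
    (Measurable.ite measurableSet_Iio measurable_const measurable_const)

lemma abs_coe_sign_le_one (r : ℝ) : |((SignType.sign r : SignType) : ℝ)| ≤ 1 := by
  rcases SignType.sign r with _ | _ | _ <;> simp

lemma lintegral_optimalWeight_tsub_le [IsFiniteMeasure ν] (hf : Measurable f) {s t : ℝ}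
    (hs : 0 ≤ s) (hst : s ≤ t) :
    ∫⁻ x, (optimalWeight ν f t x - optimalWeight ν f s x) ∂ν ≤ ENNReal.ofReal (t - s) := by
  rw [lintegral_sub (measurable_optimalWeight hf s) (by simp [lintegral_optimalWeight hf])
    (Eventually.of_forall fun x => optimalWeight_mono x hst), lintegral_optimalWeight hf,
    lintegral_optimalWeight hf, tsub_le_iff_left, ENNReal.ofReal_sub _ hs]
  rcases le_total (ENNReal.ofReal s) (ν univ) with h | h
  · rw [min_eq_left h, add_tsub_cancel_of_le (ENNReal.ofReal_le_ofReal hst)]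
    exact min_le_left _ _
  · rw [min_eq_right h]
    exact (min_le_right _ _).trans le_self_add

lemma abs_mul_toReal_optimalWeight (t : ℝ) (x : α) :
    |f x| * (optimalWeight ν f t x).toReal = (‖f x‖ₑ * optimalWeight ν f t x).toReal := by
  rw [ENNReal.toReal_mul, toReal_enorm, Real.norm_eq_abs]

lemma integrable_abs_mul_optimalWeight [IsFiniteMeasure ν] (hf : Measurable f) {t : ℝ}
    (hfin : kFunctional ν f t ≠ ⊤) :
    Integrable (fun x => |f x| * (optimalWeight ν f t x).toReal) ν := by
  simp only [abs_mul_toReal_optimalWeight]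
  refine integrable_toReal_of_lintegral_ne_top
    (hf.enorm.mul (measurable_optimalWeight hf t)).aemeasurable ?_
  rwa [lintegral_enorm_mul_optimalWeight hf]

lemma integral_abs_mul_optimalWeight [IsFiniteMeasure ν] (hf : Measurable f) (t : ℝ) :
    ∫ x, |f x| * (optimalWeight ν f t x).toReal ∂ν = (kFunctional ν f t).toReal := by
  simp only [abs_mul_toReal_optimalWeight]
  rw [integral_toReal (f := fun x => ‖f x‖ₑ * optimalWeight ν f t x)
    (hf.enorm.mul (measurable_optimalWeight hf t)).aemeasurable,
    lintegral_enorm_mul_optimalWeight hf]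
  exact Eventually.of_forall fun x =>
    ENNReal.mul_lt_top enorm_lt_top ((optimalWeight_le_one t x).trans_lt ENNReal.one_lt_top)

/-- The increment of the optimal weights on `S` between the masses `s` and `t`, with the sign of
`f`, so that its pairing with `f` is the increment of the K-functional. -/
noncomputable def weightIncrement (μ : Measure α) (S : Set α) (f : α → ℝ) (s t : ℝ) : α → ℝ :=
  S.indicator fun x => SignType.sign (f x) *
    ((optimalWeight (μ.restrict S) f t x).toReal - (optimalWeight (μ.restrict S) f s x).toReal)

variable {S : Set α} {s t : ℝ}

lemma measurable_weightIncrement (hf : Measurable f) (hS : MeasurableSet S) :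
    Measurable (weightIncrement μ S f s t) :=
  ((measurable_coe_sign.comp hf).mul ((measurable_optimalWeight hf t).ennreal_toReal.sub
    (measurable_optimalWeight hf s).ennreal_toReal)).indicator hS

lemma optimalWeight_ne_top (t : ℝ) (x : α) : optimalWeight ν f t x ≠ ⊤ :=
  ((optimalWeight_le_one t x).trans_lt ENNReal.one_lt_top).ne

lemma abs_weightIncrement_le (hst : s ≤ t) (x : α) :
    |weightIncrement μ S f s t x| ≤ (optimalWeight (μ.restrict S) f t x).toReal -
      (optimalWeight (μ.restrict S) f s x).toReal := by
  have hsub := sub_nonneg.2 (ENNReal.toReal_mono (optimalWeight_ne_top t x)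
    (optimalWeight_mono (ν := μ.restrict S) (f := f) x hst))
  by_cases hx : x ∈ S
  · rw [weightIncrement, indicator_of_mem hx, abs_mul, abs_of_nonneg hsub]
    exact mul_le_of_le_one_left hsub (abs_coe_sign_le_one _)
  · rwa [weightIncrement, indicator_of_notMem hx, abs_zero]

lemma lintegral_enorm_weightIncrement_le [IsFiniteMeasure (μ.restrict S)] (hf : Measurable f)
    (hs : 0 ≤ s) (hst : s ≤ t) :
    ∫⁻ x, ‖weightIncrement μ S f s t x‖ₑ ∂μ ≤ ENNReal.ofReal (t - s) :=
  calc ∫⁻ x, ‖weightIncrement μ S f s t x‖ₑ ∂μ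
      = ∫⁻ x in S, ‖weightIncrement μ S f s t x‖ₑ ∂μ :=
        (setLIntegral_eq_of_support_subset fun x hx => by
          by_contra hxS
          simp [weightIncrement, hxS] at hx).symm
    _ ≤ ∫⁻ x in S,
          (optimalWeight (μ.restrict S) f t x - optimalWeight (μ.restrict S) f s x) ∂μ := by
        refine lintegral_mono fun x => ?_
        rw [← ENNReal.ofReal_toReal (optimalWeight_ne_top t x),
          ← ENNReal.ofReal_toReal (optimalWeight_ne_top s x),
          ← ENNReal.ofReal_sub _ ENNReal.toReal_nonneg, ← ofReal_norm]
        exact ENNReal.ofReal_le_ofReal (abs_weightIncrement_le hst x)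
    _ ≤ _ := lintegral_optimalWeight_tsub_le hf hs hst

lemma mul_weightIncrement_eq_indicator :
    (fun x => f x * weightIncrement μ S f s t x) = S.indicator fun x =>
      |f x| * (optimalWeight (μ.restrict S) f t x).toReal -
        |f x| * (optimalWeight (μ.restrict S) f s x).toReal := by
  ext x
  by_cases hx : x ∈ S
  · simp only [weightIncrement, indicator_of_mem hx]
    rw [← mul_assoc, mul_comm (f x), sign_mul_self, mul_sub]
  · simp [weightIncrement, hx]

lemma integrable_mul_weightIncrement [IsFiniteMeasure (μ.restrict S)] (hf : Measurable f)
    (hS : MeasurableSet S) (hs : kFunctional (μ.restrict S) f s ≠ ⊤)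
    (ht : kFunctional (μ.restrict S) f t ≠ ⊤) :
    Integrable (fun x => f x * weightIncrement μ S f s t x) μ := by
  rw [mul_weightIncrement_eq_indicator, integrable_indicator_iff hS]
  exact (integrable_abs_mul_optimalWeight hf ht).sub (integrable_abs_mul_optimalWeight hf hs)

lemma integral_mul_weightIncrement [IsFiniteMeasure (μ.restrict S)] (hf : Measurable f)
    (hS : MeasurableSet S) (hs : kFunctional (μ.restrict S) f s ≠ ⊤)
    (ht : kFunctional (μ.restrict S) f t ≠ ⊤) :
    ∫ x, f x * weightIncrement μ S f s t x ∂μ =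
      (kFunctional (μ.restrict S) f t).toReal - (kFunctional (μ.restrict S) f s).toReal := by
  rw [mul_weightIncrement_eq_indicator, integral_indicator hS, integral_sub
    (integrable_abs_mul_optimalWeight hf ht) (integrable_abs_mul_optimalWeight hf hs),
    integral_abs_mul_optimalWeight hf, integral_abs_mul_optimalWeight hf]

end WeightIncrement

section LayerForm

lemma sum_range_enorm_le_of_abs_le_sub {r a : ℕ → ℝ} (hr : ∀ j, |r j| ≤ a j - a (j + 1)) (N : ℕ) :
    ∑ j ∈ Finset.range N, ‖r j‖ₑ ≤ ENNReal.ofReal (a 0 - a N) :=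
  calc ∑ j ∈ Finset.range N, ‖r j‖ₑ = ENNReal.ofReal (∑ j ∈ Finset.range N, |r j|) := by
        rw [ENNReal.ofReal_sum_of_nonneg fun j _ => abs_nonneg _]
        simp only [Real.enorm_eq_ofReal_abs]
    _ ≤ ENNReal.ofReal (a 0 - a N) := by
        rw [← Finset.sum_range_sub']
        exact ENNReal.ofReal_le_ofReal (Finset.sum_le_sum fun j _ => hr j)

lemma sum_range_mul_sub_succ_add_mul (k : ℕ → ℝ) (N : ℕ) :
    ∑ j ∈ Finset.range N, (j : ℝ) * (k j - k (j + 1)) + N * k N =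
      ∑ j ∈ Finset.range N, k (j + 1) := by
  induction N with
  | zero => simp
  | succ N ih =>
    rw [Finset.sum_range_succ, Finset.sum_range_succ, ← ih]
    push_cast
    ring

section SignIndicator

variable {α : Type*} {A : Set α} {v : α → ℝ}

/-- The sign of `v` on `A`, extended by zero; pairing it with `v` integrates `|v|` over `A`. -/
noncomputable def signIndicator (A : Set α) (v : α → ℝ) : α → ℝ :=
  A.indicator fun x => SignType.sign (v x)

lemma abs_signIndicator_le (A : Set α) (v : α → ℝ) (x : α) :
    |signIndicator A v x| ≤ A.indicator 1 x := by
  by_cases hx : x ∈ A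
  · simpa [signIndicator, hx] using abs_coe_sign_le_one (v x)
  · simp [signIndicator, hx]

lemma mul_signIndicator (A : Set α) (v : α → ℝ) :
    (fun x => v x * signIndicator A v x) = A.indicator fun x => |v x| := by
  ext x
  by_cases hx : x ∈ A
  · simp [signIndicator, hx, mul_comm (v x), sign_mul_self]
  · simp [signIndicator, hx]

lemma sum_enorm_signIndicator_le {E : ℕ → Set α} (hE : Antitone E) {v : α → ℝ} (N : ℕ) (x : α) :
    ∑ j ∈ Finset.range N, ‖signIndicator (E j \ E (j + 1)) v x‖ₑ ≤ 1 := by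
  refine (sum_range_enorm_le_of_abs_le_sub (a := fun j => (E j).indicator 1 x)
    (fun j => (abs_signIndicator_le _ _ x).trans_eq ?_) N).trans (ENNReal.ofReal_le_one.2 ?_)
  · rw [indicator_sdiff (hE j.le_succ), Pi.sub_apply]
  · exact (sub_le_self _ (indicator_nonneg (by simp) x)).trans (indicator_le_self' (by simp) x)

variable [MeasurableSpace α] {μ : Measure α}

lemma measurable_signIndicator (hA : MeasurableSet A) (hv : Measurable v) :
    Measurable (signIndicator A v) :=
  (measurable_coe_sign.comp hv).indicator hA

lemma eLpNorm_one_signIndicator_le (hA : MeasurableSet A) :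
    eLpNorm (signIndicator A v) 1 μ ≤ μ A := by
  rw [eLpNorm_one_eq_lintegral_enorm, ← lintegral_indicator_one hA]
  refine lintegral_mono fun x => ?_
  rw [Real.enorm_eq_ofReal_abs]
  refine (ENNReal.ofReal_le_ofReal (abs_signIndicator_le A v x)).trans ?_
  by_cases hx : x ∈ A <;> simp [hx]

end SignIndicator

variable {α : Type*} [MeasurableSpace α] {μ : Measure α}

lemma integralExtension_mul_mk {u : α →ₘ[μ] ℝ} {w : α → ℝ} (hw : AEStronglyMeasurable w μ)
    (hint : Integrable (fun x => u x * w x) μ) :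
    integralExtension μ (u * AEEqFun.mk w hw) = ∫ x, u x * w x ∂μ := by
  have heq : (u * AEEqFun.mk w hw : α →ₘ[μ] ℝ) =ᵐ[μ] fun x => u x * w x := by
    filter_upwards [AEEqFun.coeFn_mul u (AEEqFun.mk w hw), AEEqFun.coeFn_mk w hw] with x h₁ h₂
    rw [h₁, Pi.mul_apply, h₂]
  rw [integralExtension_eq_integral (hint.congr heq.symm), integral_congr_ae heq]

lemma sum_enorm_weightIncrement_le {S : Set α} {f : α → ℝ} {τ : ℕ → ℝ} (hτ : Antitone τ) (N : ℕ)
    (x : α) : ∑ j ∈ Finset.range N, ‖weightIncrement μ S f (τ (j + 1)) (τ j) x‖ₑ ≤ 1 := by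
  refine (sum_range_enorm_le_of_abs_le_sub
    (fun j => abs_weightIncrement_le (hτ j.le_succ) x) N).trans (ENNReal.ofReal_le_one.2 ?_)
  refine (sub_le_self _ ENNReal.toReal_nonneg).trans ?_
  exact ENNReal.toReal_mono ENNReal.one_ne_top (optimalWeight_le_one (τ 0) x)

/-- The form pairing the increments of the optimal weights of `f` on `S` with the signs of `v` on
the layers `E j \ E (j + 1)`, where the layers are traversed at the rate given by their measure. -/
noncomputable def layerForm {S : Set α} {E : ℕ → Set α} (hS : MeasurableSet S)
    (hE : ∀ j, MeasurableSet (E j)) (f v : α →ₘ[μ] ℝ) (N : ℕ) :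
    (α →ₘ[μ] ℝ) →ₗ[ℝ] (α →ₘ[μ] ℝ) →ₗ[ℝ] ℝ :=
  finiteRankForm (Finset.range N) (fun j => (μ (E j \ E (j + 1))).toNNReal)
    (fun j => AEEqFun.mk (weightIncrement μ S f (μ.real (E (j + 1))) (μ.real (E j)))
      (measurable_weightIncrement f.measurable hS).aestronglyMeasurable)
    (fun j => AEEqFun.mk (signIndicator (E j \ E (j + 1)) v)
      (measurable_signIndicator ((hE j).diff (hE (j + 1))) v.measurable).aestronglyMeasurable)

variable {S : Set α} {E : ℕ → Set α} {hS : MeasurableSet S} {hE : ∀ j, MeasurableSet (E j)}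
  {f v : α →ₘ[μ] ℝ}

lemma isAdmissible_layerForm [IsFiniteMeasure (μ.restrict S)] (hanti : Antitone E)
    (hfin : μ (E 0) ≠ ⊤) (N : ℕ) : IsAdmissible (layerForm hS hE f v N) := by
  have hEfin (j : ℕ) : μ (E j) ≠ ⊤ := measure_ne_top_of_subset (hanti j.zero_le) hfin
  have hmono (j : ℕ) : μ.real (E (j + 1)) ≤ μ.real (E j) :=
    measureReal_mono (hanti j.le_succ) (hEfin j)
  have hdiff (j : ℕ) :
      ENNReal.ofReal (μ.real (E j) - μ.real (E (j + 1))) = μ (E j \ E (j + 1)) := by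
    rw [← measureReal_sdiff (hanti j.le_succ) (hE (j + 1)) (hEfin j),
      ofReal_measureReal (measure_ne_top_of_subset sdiff_subset (hEfin j))]
  have hcoe (j : ℕ) : ((μ (E j \ E (j + 1))).toNNReal : ℝ≥0∞) = μ (E j \ E (j + 1)) :=
    ENNReal.coe_toNNReal (measure_ne_top_of_subset sdiff_subset (hEfin j))
  refine isAdmissible_finiteRankForm ?_ ?_ (fun j _ => ?_) fun j _ => ?_
  · filter_upwards [ae_all_iff.2 fun j : ℕ => AEEqFun.coeFn_mk _ (measurable_weightIncrement
      (μ := μ) (s := μ.real (E (j + 1))) (t := μ.real (E j)) f.measurable hS).aestronglyMeasurable]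
      with x hx
    simp only [hx]
    exact sum_enorm_weightIncrement_le (antitone_nat_of_succ_le hmono) N x
  · filter_upwards [ae_all_iff.2 fun j : ℕ => AEEqFun.coeFn_mk _ (measurable_signIndicator
      ((hE j).diff (hE (j + 1))) v.measurable).aestronglyMeasurable] with x hx
    simp only [hx]
    exact sum_enorm_signIndicator_le hanti N x
  · rw [eLpNorm_congr_ae (AEEqFun.coeFn_mk _ _), eLpNorm_one_eq_lintegral_enorm, hcoe, ← hdiff]
    exact lintegral_enorm_weightIncrement_le f.measurable measureReal_nonneg (hmono j)
  · rw [eLpNorm_congr_ae (AEEqFun.coeFn_mk _ _), hcoe]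
    exact eLpNorm_one_signIndicator_le ((hE j).diff (hE (j + 1)))

lemma layerForm_apply_self [IsFiniteMeasure (μ.restrict S)]
    (hK : ∀ t, kFunctional (μ.restrict S) f t ≠ ⊤) (hv : ∀ j, IntegrableOn v (E j) μ) (N : ℕ) :
    layerForm hS hE f v N f v = ∑ j ∈ Finset.range N, (μ.real (E j \ E (j + 1)))⁻¹ *
      (((kFunctional (μ.restrict S) f (μ.real (E j))).toReal -
        (kFunctional (μ.restrict S) f (μ.real (E (j + 1)))).toReal) *
        ∫ x in E j \ E (j + 1), |v x| ∂μ) := by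
  rw [layerForm, finiteRankForm_apply]
  refine Finset.sum_congr rfl fun j _ => ?_
  have hint : Integrable (fun x => v x * signIndicator (E j \ E (j + 1)) v x) μ := by
    rw [mul_signIndicator, integrable_indicator_iff ((hE j).diff (hE (j + 1)))]
    exact ((hv j).mono_set sdiff_subset).abs
  rw [integralExtension_mul_mk _ (integrable_mul_weightIncrement f.measurable hS (hK _) (hK _)),
    integral_mul_weightIncrement f.measurable hS (hK _) (hK _), integralExtension_mul_mk _ hint,
    mul_signIndicator, integral_indicator ((hE j).diff (hE (j + 1)))]
  rfl

lemma mul_sum_kFunctional_le_layerForm [IsFiniteMeasure (μ.restrict S)] (hanti : Antitone E)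
    (hK : ∀ t, kFunctional (μ.restrict S) f t ≠ ⊤) (hfin : μ (E 0) ≠ ⊤)
    (hv : IntegrableOn v (E 0) μ) {h : ℝ} (hvE : ∀ (j : ℕ), ∀ x ∈ E j, j * h ≤ |v x|) {N : ℕ}
    (hN : μ (E N) = 0) :
    h * ∑ j ∈ Finset.range N, (kFunctional (μ.restrict S) f (μ.real (E (j + 1)))).toReal ≤
      layerForm hS hE f v N f v := by
  have hEfin (j : ℕ) : μ (E j) ≠ ⊤ := measure_ne_top_of_subset (hanti j.zero_le) hfin
  have hvj (j : ℕ) : IntegrableOn v (E j) μ := hv.mono_set (hanti j.zero_le)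
  set k : ℕ → ℝ := fun j => (kFunctional (μ.restrict S) f (μ.real (E j))).toReal
  have hkN : k N = 0 := by simp [k, kFunctional, measureReal_def, hN]
  have hkanti (j : ℕ) : k (j + 1) ≤ k j :=
    ENNReal.toReal_mono (hK _)
      (kFunctional_mono (measureReal_mono (hanti j.le_succ) (hEfin j)))
  rw [← sum_range_mul_sub_succ_add_mul k, hkN, mul_zero, add_zero, layerForm_apply_self hK hvj,
    Finset.mul_sum]
  refine Finset.sum_le_sum fun j _ => ?_
  set d := μ.real (E j \ E (j + 1))
  have hdfin : μ (E j \ E (j + 1)) ≠ ⊤ := measure_ne_top_of_subset sdiff_subset (hEfin j)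
  have hlayer : j * h * d ≤ ∫ x in E j \ E (j + 1), |v x| ∂μ :=
    setIntegral_ge_of_const_le_real ((hE j).diff (hE (j + 1))) hdfin (fun x hx => hvE j x hx.1)
      ((hvj j).mono_set sdiff_subset).abs
  change _ ≤ d⁻¹ * ((k j - k (j + 1)) * _)
  rcases eq_or_ne d 0 with hd0 | hd0
  · have hkj : k j = k (j + 1) := by
      have hsub := measureReal_sdiff (hanti j.le_succ) (hE (j + 1)) (hEfin j)
      simp only [k, sub_eq_zero.1 (hsub.symm.trans hd0)]
    simp [hd0, hkj]
  · calc h * (j * (k j - k (j + 1))) = d⁻¹ * ((k j - k (j + 1)) * (j * h * d)) := by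
          field_simp
      _ ≤ d⁻¹ * ((k j - k (j + 1)) * ∫ x in E j \ E (j + 1), |v x| ∂μ) := by
          have := sub_nonneg.2 (hkanti j)
          gcongr

end LayerForm

section AdmissibleSup

variable {α : Type*} [MeasurableSpace α] {μ : Measure α} {f g v : α →ₘ[μ] ℝ}

/-- The supremum of `|β f v|` over the admissible forms `β`. -/
noncomputable def admissibleSup (f v : α →ₘ[μ] ℝ) : ℝ≥0∞ :=
  ⨆ β : {β : (α →ₘ[μ] ℝ) →ₗ[ℝ] (α →ₘ[μ] ℝ) →ₗ[ℝ] ℝ // IsAdmissible β}, ‖β.1 f v‖ₑ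

lemma mul_sum_kFunctional_le_admissibleSup [SigmaFinite μ] {E : ℕ → Set α}
    (hE : ∀ j, MeasurableSet (E j)) (hanti : Antitone E) (hK : ∀ t, kFunctional μ f t ≠ ⊤)
    (hfin : μ (E 0) ≠ ⊤) (hv : IntegrableOn v (E 0) μ) {h : ℝ} (hh : 0 ≤ h)
    (hvE : ∀ (j : ℕ), ∀ x ∈ E j, j * h ≤ |v x|) {N : ℕ} (hN : μ (E N) = 0) :
    ENNReal.ofReal h * ∑ j ∈ Finset.range N, kFunctional μ f (μ.real (E (j + 1))) ≤
      admissibleSup f v := by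
  simp only [kFunctional_eq_iSup_restrict_spanningSets (μ := μ) (f := f)]
  rw [ENNReal.finsetSum_iSup_of_monotone
    (f := fun j k => kFunctional (μ.restrict (spanningSets μ k)) f (μ.real (E (j + 1))))
    fun j k l hkl => kFunctional_mono_measure
      (Measure.restrict_mono (monotone_spanningSets μ hkl) le_rfl) _,
    ENNReal.mul_iSup]
  refine iSup_le fun k => ?_
  have : IsFiniteMeasure (μ.restrict (spanningSets μ k)) :=
    isFiniteMeasure_restrict.2 (measure_spanningSets_lt_top μ k).ne
  have hKk (t : ℝ) : kFunctional (μ.restrict (spanningSets μ k)) f t ≠ ⊤ :=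
    ne_top_of_le_ne_top (hK t) (kFunctional_mono_measure Measure.restrict_le_self t)
  have hlayer := mul_sum_kFunctional_le_layerForm (hS := measurableSet_spanningSets μ k) (hE := hE)
    hanti hKk hfin hv hvE hN
  calc ENNReal.ofReal h * ∑ j ∈ Finset.range N,
        kFunctional (μ.restrict (spanningSets μ k)) f (μ.real (E (j + 1)))
      = ENNReal.ofReal (h * ∑ j ∈ Finset.range N,
          (kFunctional (μ.restrict (spanningSets μ k)) f (μ.real (E (j + 1)))).toReal) := by
        rw [ENNReal.ofReal_mul hh, ENNReal.ofReal_sum_of_nonneg fun j _ => ENNReal.toReal_nonneg]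
        simp only [ENNReal.ofReal_toReal (hKk _)]
    _ ≤ ‖layerForm (measurableSet_spanningSets μ k) hE f v N f v‖ₑ := by
        rw [Real.enorm_eq_ofReal_abs]
        exact ENNReal.ofReal_le_ofReal (hlayer.trans (le_abs_self _))
    _ ≤ admissibleSup f v :=
        le_iSup (fun β : {β // IsAdmissible β} => ‖β.1 f v‖ₑ) ⟨_,
          isAdmissible_layerForm (hS := measurableSet_spanningSets μ k) (hE := hE) hanti hfin N⟩

lemma ofReal_min_le_sum_indicator (h y : ℝ) (N : ℕ) :
    ENNReal.ofReal (min y (N * h)) ≤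
      ∑ j ∈ Finset.range N, (Ioi (j * h)).indicator (fun _ => ENNReal.ofReal h) y := by
  induction N with
  | zero => simp
  | succ N ih =>
    rw [Finset.sum_range_succ]
    rcases le_or_gt y (N * h) with hy | hy
    · rw [min_eq_left hy] at ih
      exact ((ENNReal.ofReal_le_ofReal (min_le_left _ _)).trans ih).trans le_self_add
    · rw [min_eq_right hy.le] at ih
      rw [indicator_of_mem (mem_Ioi.2 hy)]
      calc ENNReal.ofReal (min y ((N + 1 : ℕ) * h)) ≤ ENNReal.ofReal (N * h + h) := by
            refine ENNReal.ofReal_le_ofReal ((min_le_right _ _).trans_eq ?_)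
            push_cast
            ring
        _ ≤ _ := ENNReal.ofReal_add_le.trans (by gcongr)

lemma setLIntegral_enorm_mul_le_sum {v g : α → ℝ} (hv : Measurable v) (hg : Measurable g)
    {A : Set α} {h : ℝ} {N : ℕ} (hvN : ∀ᵐ x ∂μ.restrict A, |v x| ≤ N * h) :
    ∫⁻ x in A, ‖v x‖ₑ * ‖g x‖ₑ ∂μ ≤
      ENNReal.ofReal h * ∑ j ∈ Finset.range N, ∫⁻ x in {x | j * h < |v x|} ∩ A, ‖g x‖ₑ ∂μ := by
  have hlevel (j : ℕ) : MeasurableSet {x | j * h < |v x|} :=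
    measurableSet_lt measurable_const hv.abs
  calc ∫⁻ x in A, ‖v x‖ₑ * ‖g x‖ₑ ∂μ
      ≤ ∫⁻ x in A, ∑ j ∈ Finset.range N,
          ENNReal.ofReal h * {x | j * h < |v x|}.indicator (fun x => ‖g x‖ₑ) x ∂μ := by
        refine lintegral_mono_ae ?_
        filter_upwards [hvN] with x hx
        have hsum := ofReal_min_le_sum_indicator h |v x| N
        rw [min_eq_left hx, ← Real.enorm_eq_ofReal_abs] at hsum
        refine (mul_le_mul_left hsum ‖g x‖ₑ).trans_eq ?_
        rw [Finset.sum_mul]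
        refine Finset.sum_congr rfl fun j _ => ?_
        by_cases hj : j * h < |v x| <;> simp [hj]
    _ = ENNReal.ofReal h * ∑ j ∈ Finset.range N, ∫⁻ x in {x | j * h < |v x|} ∩ A, ‖g x‖ₑ ∂μ := by
        rw [lintegral_finsetSum _ fun j _ => (hg.enorm.indicator (hlevel j)).const_mul _,
          Finset.mul_sum]
        refine Finset.sum_congr rfl fun j _ => ?_
        rw [lintegral_const_mul _ (hg.enorm.indicator (hlevel j)), lintegral_indicator (hlevel j),
          Measure.restrict_restrict (hlevel j)]

lemma setLIntegral_enorm_mul_le [SigmaFinite μ] (hK : ∀ t, kFunctional μ f t ≠ ⊤)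
    (hgf : ∀ t, kFunctional μ g t ≤ kFunctional μ f t) {A : Set α} (hA : MeasurableSet A)
    (hAfin : μ A ≠ ⊤) {h : ℝ} (hh : 0 ≤ h) {N : ℕ} (hv : ∀ᵐ x ∂μ, |v x| ≤ N * h) :
    ∫⁻ x in A, ‖v x‖ₑ * ‖g x‖ₑ ∂μ ≤
      ENNReal.ofReal h * kFunctional μ f (μ.real A) + admissibleSup f v := by
  let E (j : ℕ) : Set α := {x | j * h < |v x|} ∩ A
  have hEsub (j : ℕ) : E j ⊆ A := inter_subset_right
  have hlevel (j : ℕ) : MeasurableSet {x | j * h < |v x|} :=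
    measurableSet_lt measurable_const v.measurable.abs
  have hanti : Antitone E := fun i j hij =>
    inter_subset_inter_left _ fun x (hx : j * h < |v x|) =>
      show i * h < |v x| from lt_of_le_of_lt (by gcongr) hx
  have hN : μ (E N) = 0 := by
    refine measure_mono_null inter_subset_left ?_
    simpa only [ae_iff, not_le] using hv
  have hint : IntegrableOn v (E 0) μ :=
    Measure.integrableOn_of_bounded (measure_ne_top_of_subset (hEsub 0) hAfin)
      v.aestronglyMeasurable (ae_restrict_of_ae hv)
  have hE := mul_sum_kFunctional_le_admissibleSup (fun j => (hlevel j).inter hA) hanti hK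
    (measure_ne_top_of_subset (hEsub 0) hAfin) hint hh (fun j x hx => hx.1.le) hN
  calc ∫⁻ x in A, ‖v x‖ₑ * ‖g x‖ₑ ∂μ
      ≤ ENNReal.ofReal h * ∑ j ∈ Finset.range N, ∫⁻ x in E j, ‖g x‖ₑ ∂μ :=
        setLIntegral_enorm_mul_le_sum v.measurable g.measurable (ae_restrict_of_ae hv)
    _ ≤ ENNReal.ofReal h * ∑ j ∈ Finset.range (N + 1), kFunctional μ f (μ.real (E j)) := by
        rw [Finset.sum_range_succ]
        gcongr ENNReal.ofReal h * ?_
        refine (Finset.sum_le_sum fun j _ => ?_).trans le_self_add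
        exact (setLIntegral_enorm_le_kFunctional g.measurable
          (measure_ne_top_of_subset (hEsub j) hAfin)).trans (hgf _)
    _ ≤ _ := by
        rw [Finset.sum_range_succ', mul_add, add_comm]
        gcongr
        exact kFunctional_mono (measureReal_mono (hEsub 0) hAfin)

lemma eLpNorm_mul_le_admissibleSup [SigmaFinite μ] (hK : ∀ t, kFunctional μ f t ≠ ⊤)
    (hgf : ∀ t, kFunctional μ g t ≤ kFunctional μ f t) (hv : eLpNorm v ⊤ μ ≠ ⊤) :
    eLpNorm (v * g : α →ₘ[μ] ℝ) 1 μ ≤ admissibleSup f v := by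
  set M := (eLpNorm v ⊤ μ).toReal
  have hM : ∀ᵐ x ∂μ, |v x| ≤ M := by
    filter_upwards [enorm_ae_le_eLpNormEssSup v μ] with x hx
    rw [← Real.norm_eq_abs, ← toReal_enorm]
    exact ENNReal.toReal_mono hv (by rwa [eLpNorm_exponent_top])
  have hfinite {A : Set α} (hA : MeasurableSet A) (hAfin : μ A ≠ ⊤) :
      ∫⁻ x in A, ‖v x‖ₑ * ‖g x‖ₑ ∂μ ≤ admissibleSup f v := by
    have hlim : Tendsto
        (fun n : ℕ => ENNReal.ofReal (M / (n + 1 : ℕ)) * kFunctional μ f (μ.real A) +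
          admissibleSup f v) atTop
        (𝓝 (ENNReal.ofReal 0 * kFunctional μ f (μ.real A) + admissibleSup f v)) := by
      refine (ENNReal.Tendsto.mul_const (ENNReal.tendsto_ofReal ?_) (Or.inr (hK _))).add_const _
      exact (tendsto_const_div_atTop_nhds_zero_nat M).comp (tendsto_add_atTop_nat 1)
    rw [ENNReal.ofReal_zero, zero_mul, zero_add] at hlim
    refine ge_of_tendsto' hlim fun n => setLIntegral_enorm_mul_le (N := n + 1) hK hgf hA hAfin
      (div_nonneg ENNReal.toReal_nonneg (n + 1).cast_nonneg) ?_
    rwa [mul_div_cancel₀ _ (Nat.cast_ne_zero.2 n.succ_ne_zero)]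
  rw [eLpNorm_congr_ae (AEEqFun.coeFn_mul v g), eLpNorm_one_eq_lintegral_enorm]
  simp only [Pi.mul_apply, enorm_mul]
  rw [← setLIntegral_univ, ← iUnion_spanningSets μ,
    setLIntegral_iUnion_of_directed _ (monotone_spanningSets μ).directed_le]
  exact iSup_le fun k =>
    hfinite (measurableSet_spanningSets μ k) (measure_spanningSets_lt_top μ k).ne

end AdmissibleSup

section Means

lemma exists_strongDual_comp_eq {𝕜 E V : Type*} [RCLike 𝕜] [SeminormedAddCommGroup E]
    [NormedSpace 𝕜 E] [AddCommGroup V] [Module 𝕜 V] (Ψ : V →ₗ[𝕜] E) (L : V →ₗ[𝕜] 𝕜)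
    (hL : ∀ v, ‖L v‖ ≤ ‖Ψ v‖) : ∃ ℓ : StrongDual 𝕜 E, ‖ℓ‖ ≤ 1 ∧ ∀ v, ℓ (Ψ v) = L v := by
  obtain ⟨ℓ₀, hℓ₀⟩ : L ∈ Ψ.dualMap.range := by
    rw [Ψ.range_dualMap_eq_dualAnnihilator_ker, Submodule.mem_dualAnnihilator]
    intro v hv
    simpa [LinearMap.mem_ker.1 hv] using hL v
  have hbound (y : Ψ.range) : ‖ℓ₀.domRestrict Ψ.range y‖ ≤ 1 * ‖y‖ := by
    obtain ⟨v, hv⟩ := y.2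
    have : ℓ₀ (Ψ v) = L v := LinearMap.congr_fun hℓ₀ v
    simpa [← hv, this] using hL v
  obtain ⟨ℓ, hext, hnorm⟩ :=
    exists_extension_norm_eq Ψ.range ((ℓ₀.domRestrict Ψ.range).mkContinuous 1 hbound)
  refine ⟨ℓ, hnorm.trans_le (LinearMap.mkContinuous_norm_le _ zero_le_one _), fun v => ?_⟩
  exact (hext ⟨Ψ v, v, rfl⟩).trans (LinearMap.congr_fun hℓ₀ v)

lemma iSup_enorm_eq_enorm_lp {ι : Type*} (φ : lp (fun _ : ι => ℝ) ∞) :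
    ⨆ i, ‖φ i‖ₑ = ‖φ‖ₑ := by
  have hle : ⨆ i, ‖φ i‖ₑ ≤ ‖φ‖ₑ :=
    iSup_le fun i => enorm_le_iff_norm_le.2 (lp.norm_apply_le_norm ENNReal.top_ne_zero φ i)
  have hfin : ⨆ i, ‖φ i‖ₑ ≠ ⊤ := ne_top_of_le_ne_top enorm_ne_top hle
  refine hle.antisymm ?_
  rw [← ofReal_norm]
  refine ENNReal.ofReal_le_of_le_toReal (lp.norm_le_of_forall_le ENNReal.toReal_nonneg fun i => ?_)
  rw [← toReal_enorm]
  exact ENNReal.toReal_mono hfin (le_iSup (fun i => ‖φ i‖ₑ) i)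

lemma memℓp_top_of_iSup_enorm_ne_top {ι : Type*} {φ : ι → ℝ} (hφ : ⨆ i, ‖φ i‖ₑ ≠ ⊤) :
    Memℓp φ ∞ := by
  refine memℓp_infty ⟨(⨆ i, ‖φ i‖ₑ).toReal, forall_mem_range.2 fun i => ?_⟩
  rw [← toReal_enorm]
  exact ENNReal.toReal_mono hφ (le_iSup (fun i => ‖φ i‖ₑ) i)

lemma exists_mean_comp_eq {ι V : Type*} [AddCommGroup V] [Module ℝ V] (Φ : V →ₗ[ℝ] ι → ℝ)
    (L : V →ₗ[ℝ] ℝ) (hΦ : ∀ v, ⨆ i, ‖Φ v i‖ₑ ≠ ⊤) (hL : ∀ v, ‖L v‖ₑ ≤ ⨆ i, ‖Φ v i‖ₑ) :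
    ∃ Λ : (ι → ℝ) →ₗ[ℝ] ℝ, (∀ φ, ‖Λ φ‖ₑ ≤ ⨆ i, ‖φ i‖ₑ) ∧ Λ ∘ₗ Φ = L := by
  let J : lp (fun _ : ι => ℝ) ∞ →ₗ[ℝ] ι → ℝ :=
    { toFun := fun φ => φ, map_add' := fun _ _ => rfl, map_smul' := fun _ _ => rfl }
  obtain ⟨P, hP⟩ := J.exists_leftInverse_of_injective
    (LinearMap.ker_eq_bot.2 fun _ _ h => Subtype.ext h)
  have hP_enorm {φ : ι → ℝ} (hφ : ⨆ i, ‖φ i‖ₑ ≠ ⊤) : ‖P φ‖ₑ = ⨆ i, ‖φ i‖ₑ := by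
    have hPφ : P φ = ⟨φ, memℓp_top_of_iSup_enorm_ne_top hφ⟩ := LinearMap.congr_fun hP ⟨φ, _⟩
    rw [hPφ, ← iSup_enorm_eq_enorm_lp]
  obtain ⟨ℓ, hℓ, hℓL⟩ := exists_strongDual_comp_eq (P ∘ₗ Φ) L fun v =>
    enorm_le_iff_norm_le.1 ((hL v).trans_eq (hP_enorm (hΦ v)).symm)
  refine ⟨ℓ.toLinearMap ∘ₗ P, fun φ => ?_, LinearMap.ext hℓL⟩
  rcases eq_or_ne (⨆ i, ‖φ i‖ₑ) ⊤ with htop | hfin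
  · simp [htop]
  rw [← hP_enorm hfin, enorm_le_iff_norm_le]
  exact (ℓ.le_of_opNorm_le hℓ _).trans_eq (one_mul _)

end Means

section AdmissibleMean

variable {α : Type*} [MeasurableSpace α] {μ : Measure α}

lemma mem_lpSubmodule_iff {p : ℝ≥0∞} {u : α →ₘ[μ] ℝ} :
    u ∈ Lp.LpSubmodule ℝ ℝ p μ ↔ eLpNorm u p μ ≠ ⊤ :=
  Lp.mem_Lp_iff_eLpNorm_lt_top.trans lt_top_iff_ne_top

lemma admissibleSup_add_le (f₁ f₂ v : α →ₘ[μ] ℝ) :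
    admissibleSup (f₁ + f₂) v ≤
      eLpNorm f₁ 1 μ * eLpNorm v ⊤ μ + eLpNorm f₂ ⊤ μ * eLpNorm v 1 μ :=
  iSup_le fun β => by
    rw [map_add, LinearMap.add_apply]
    exact (enorm_add_le _ _).trans
      (add_le_add (β.2.enorm_le_one_top f₁ v) (β.2.enorm_le_top_one f₂ v))

lemma kFunctional_add_ne_top [SigmaFinite μ] {f₁ f₂ : α →ₘ[μ] ℝ} (hf₁ : eLpNorm f₁ 1 μ ≠ ⊤)
    (hf₂ : eLpNorm f₂ ⊤ μ ≠ ⊤) (t : ℝ) : kFunctional μ (f₁ + f₂ : α →ₘ[μ] ℝ) t ≠ ⊤ :=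
  ne_top_of_le_ne_top
    (ENNReal.add_ne_top.2 ⟨hf₁, ENNReal.mul_ne_top ENNReal.ofReal_ne_top hf₂⟩)
    (kFunctional_le_eLpNorm_add (AEEqFun.measurable _) (AEEqFun.coeFn_add f₁ f₂) t)

lemma admissibleSup_add_ne_top {f₁ f₂ v : α →ₘ[μ] ℝ} (hf₁ : eLpNorm f₁ 1 μ ≠ ⊤)
    (hf₂ : eLpNorm f₂ ⊤ μ ≠ ⊤) (hv₁ : eLpNorm v 1 μ ≠ ⊤) (hv₂ : eLpNorm v ⊤ μ ≠ ⊤) :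
    admissibleSup (f₁ + f₂) v ≠ ⊤ :=
  ne_top_of_le_ne_top
    (ENNReal.add_ne_top.2 ⟨ENNReal.mul_ne_top hf₁ hv₂, ENNReal.mul_ne_top hf₂ hv₁⟩)
    (admissibleSup_add_le f₁ f₂ v)

lemma exists_isAdmissible_eq_integralExtension {f g : α →ₘ[μ] ℝ}
    (hfin : ∀ v : α →ₘ[μ] ℝ, eLpNorm v 1 μ ≠ ⊤ → eLpNorm v ⊤ μ ≠ ⊤ → admissibleSup f v ≠ ⊤)
    (hg : ∀ v : α →ₘ[μ] ℝ, eLpNorm v ⊤ μ ≠ ⊤ →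
      eLpNorm (v * g : α →ₘ[μ] ℝ) 1 μ ≤ admissibleSup f v) :
    ∃ β : (α →ₘ[μ] ℝ) →ₗ[ℝ] (α →ₘ[μ] ℝ) →ₗ[ℝ] ℝ, IsAdmissible β ∧
      ∀ v : α →ₘ[μ] ℝ, eLpNorm v 1 μ ≠ ⊤ → eLpNorm v ⊤ μ ≠ ⊤ →
        β f v = integralExtension μ (v * g) := by
  let V := Lp.LpSubmodule ℝ ℝ 1 μ ⊓ Lp.LpSubmodule ℝ ℝ ⊤ μ
  let Φ : (α →ₘ[μ] ℝ) →ₗ[ℝ] (α →ₘ[μ] ℝ) →ₗ[ℝ]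
      {β : (α →ₘ[μ] ℝ) →ₗ[ℝ] (α →ₘ[μ] ℝ) →ₗ[ℝ] ℝ // IsAdmissible β} → ℝ :=
    LinearMap.mk₂ ℝ (fun u v β => β.1 u v)
      (fun _ _ _ => by ext; simp) (fun _ _ _ => by ext; simp)
      (fun _ _ _ => by ext; simp) (fun _ _ _ => by ext; simp)
  obtain ⟨Λ, hΛ, hΛf⟩ := exists_mean_comp_eq (Φ f ∘ₗ V.subtype)
    (integralExtension μ ∘ₗ mulRightLinear g ∘ₗ V.subtype)
    (fun v => hfin v (mem_lpSubmodule_iff.1 v.2.1) (mem_lpSubmodule_iff.1 v.2.2))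
    (fun v => (enorm_integralExtension_le _).trans (hg v (mem_lpSubmodule_iff.1 v.2.2)))
  refine ⟨Φ.compr₂ Λ, ⟨fun u v => (hΛ _).trans (iSup_le fun β => β.2.enorm_le_one_top u v),
    fun u v => (hΛ _).trans (iSup_le fun β => β.2.enorm_le_top_one u v)⟩, fun v hv₁ hv₂ => ?_⟩
  exact LinearMap.congr_fun hΛf ⟨v, mem_lpSubmodule_iff.2 hv₁, mem_lpSubmodule_iff.2 hv₂⟩

end AdmissibleMean

section DualOfLOne

variable {α : Type*} [MeasurableSpace α] {μ : Measure α}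

lemma tendsto_setLIntegral_enorm_truncation {h : α → ℝ} (hh : Measurable h)
    (hpos : ∀ᵐ x ∂μ, 0 < h x) {v : α → ℝ} (hv : Measurable v) (hv₁ : eLpNorm v 1 μ ≠ ⊤) :
    Tendsto (fun n : ℕ => ∫⁻ x in {x | n * h x < |v x|}, ‖v x‖ₑ ∂μ) atTop (𝓝 0) := by
  have hmeas (n : ℕ) : MeasurableSet {x | n * h x < |v x|} :=
    measurableSet_lt (by fun_prop) (by fun_prop)
  simp only [← lintegral_indicator (hmeas _)]
  rw [eLpNorm_one_eq_lintegral_enorm] at hv₁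
  rw [← lintegral_zero (μ := μ)]
  refine tendsto_lintegral_of_dominated_convergence (fun x => ‖v x‖ₑ)
    (fun n => hv.enorm.indicator (hmeas n))
    (fun n => ae_of_all _ fun x => indicator_le_self _ _ x) hv₁ (hpos.mono fun x hx => ?_)
  refine tendsto_const_nhds.congr' ?_
  filter_upwards [(tendsto_natCast_atTop_atTop.atTop_mul_const hx).eventually_ge_atTop |v x|]
    with n hn
  simp [indicator, hn.not_gt]

lemma exists_abs_le_mul_eLpNorm_sub_lt {h : α → ℝ} (hh : Measurable h) (hpos : ∀ᵐ x ∂μ, 0 < h x)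
    {v : α →ₘ[μ] ℝ} (hv : eLpNorm v 1 μ ≠ ⊤) {ε : ℝ≥0∞} (hε : ε ≠ 0) :
    ∃ (n : ℕ) (w : α →ₘ[μ] ℝ), (∀ᵐ x ∂μ, |w x| ≤ n * h x) ∧ eLpNorm w 1 μ ≠ ⊤ ∧
      eLpNorm (v - w : α →ₘ[μ] ℝ) 1 μ < ε := by
  have hlim := tendsto_setLIntegral_enorm_truncation hh hpos v.measurable hv
  obtain ⟨n, hn⟩ := (hlim.eventually_lt_const hε.bot_lt).exists
  have hA : MeasurableSet {x | n * h x < |v x|} :=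
    measurableSet_lt (by fun_prop) (by have := v.measurable; fun_prop)
  have hw := (AEEqFun.measurable v).indicator hA.compl
  refine ⟨n, AEEqFun.mk _ hw.aestronglyMeasurable, ?_, ?_, ?_⟩
  · filter_upwards [AEEqFun.coeFn_mk _ hw.aestronglyMeasurable, hpos] with x hx hhx
    rw [hx]
    by_cases hxA : x ∈ {x | n * h x < |v x|}
    · simpa [hxA] using mul_nonneg n.cast_nonneg hhx.le
    · rw [indicator_of_mem hxA]
      exact not_lt.1 hxA
  · rw [eLpNorm_congr_ae (AEEqFun.coeFn_mk _ _)]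
    exact ne_top_of_le_ne_top hv (eLpNorm_indicator_le _)
  · refine lt_of_eq_of_lt ?_ hn
    rw [eLpNorm_one_eq_lintegral_enorm, ← lintegral_indicator hA]
    refine lintegral_congr_ae ?_
    filter_upwards [AEEqFun.coeFn_mk _ hw.aestronglyMeasurable, AEEqFun.coeFn_sub v
      (AEEqFun.mk _ hw.aestronglyMeasurable)] with x hx hsub
    rw [hsub, Pi.sub_apply, hx]
    by_cases hxA : x ∈ {x | n * h x < |v x|} <;> simp [hxA]

lemma eq_zero_of_forall_abs_le_mul {h : α → ℝ} (hh : Measurable h) (hpos : ∀ᵐ x ∂μ, 0 < h x)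
    {ℓ : (α →ₘ[μ] ℝ) →ₗ[ℝ] ℝ} {C : ℝ≥0∞} (hC : C ≠ ⊤) (hℓ : ∀ v, ‖ℓ v‖ₑ ≤ C * eLpNorm v 1 μ)
    (hzero : ∀ (n : ℕ) (w : α →ₘ[μ] ℝ), (∀ᵐ x ∂μ, |w x| ≤ n * h x) → eLpNorm w 1 μ ≠ ⊤ → ℓ w = 0)
    {v : α →ₘ[μ] ℝ} (hv : eLpNorm v 1 μ ≠ ⊤) : ℓ v = 0 := by
  rw [← enorm_eq_zero]
  by_contra hne
  obtain ⟨n, w, hwn, hw, hlt⟩ := exists_abs_le_mul_eLpNorm_sub_lt hh hpos hv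
    (ENNReal.div_ne_zero.2 ⟨hne, hC⟩)
  have hle : ‖ℓ v‖ₑ ≤ C * eLpNorm (v - w : α →ₘ[μ] ℝ) 1 μ := by
    simpa [map_sub, hzero n w hwn hw] using hℓ (v - w)
  exact (hle.trans_lt (ENNReal.mul_lt_of_lt_div' hlt)).false

lemma exists_pos_memLp_two (μ : Measure α) [SigmaFinite μ] :
    ∃ s : α → ℝ, Measurable s ∧ (∀ x, 0 < s x) ∧ MemLp s 2 μ := by
  obtain ⟨g, hpos, hg, hint⟩ := exists_pos_lintegral_lt_of_sigmaFinite μ one_ne_zero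
  have hs : Measurable fun x => √(g x : ℝ) := by fun_prop
  refine ⟨_, hs, fun x => Real.sqrt_pos.2 (hpos x), ?_⟩
  rw [memLp_two_iff_integrable_sq hs.aestronglyMeasurable]
  simp only [Real.sq_sqrt (NNReal.coe_nonneg _)]
  refine ⟨by fun_prop, ?_⟩
  simpa [HasFiniteIntegral] using hint.trans ENNReal.one_lt_top

lemma exists_mul_eq_one_pos_eLpNorm_two_ne_top (μ : Measure α) [SigmaFinite μ] :
    ∃ q s : α →ₘ[μ] ℝ, q * s = 1 ∧ (∀ᵐ x ∂μ, 0 < s x) ∧ eLpNorm s 2 μ ≠ ⊤ := by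
  obtain ⟨s, hs, hpos, hs₂⟩ := exists_pos_memLp_two μ
  have hcoe := AEEqFun.coeFn_mk (μ := μ) s hs.aestronglyMeasurable
  refine ⟨AEEqFun.mk (fun x => (s x)⁻¹) hs.inv.aestronglyMeasurable,
    AEEqFun.mk s hs.aestronglyMeasurable, ?_, hcoe.mono fun x hx => (hpos x).trans_eq hx.symm,
    (eLpNorm_congr_ae hcoe).trans_ne hs₂.2.ne⟩
  rw [AEEqFun.mk_mul_mk, AEEqFun.one_def, AEEqFun.mk_eq_mk]
  exact ae_of_all _ fun x => inv_mul_cancel₀ (hpos x).ne'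

-- `w ↦ ℓ (w s)` is bounded on `L²`, where the Riesz representation theorem applies.
lemma exists_eq_integralExtension_of_mul {s : α →ₘ[μ] ℝ} (hs : eLpNorm s 2 μ ≠ ⊤)
    {ℓ : (α →ₘ[μ] ℝ) →ₗ[ℝ] ℝ} {C : ℝ≥0∞} (hC : C ≠ ⊤) (hℓ : ∀ v, ‖ℓ v‖ₑ ≤ C * eLpNorm v 1 μ) :
    ∃ R : α →ₘ[μ] ℝ, eLpNorm R 2 μ ≠ ⊤ ∧ ∀ w : α →ₘ[μ] ℝ, eLpNorm w 2 μ ≠ ⊤ →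
      ℓ (w * s) = integralExtension μ (w * R) := by
  have hbound (w : Lp ℝ 2 μ) : ‖ℓ (w * s)‖ ≤ (C * eLpNorm s 2 μ).toReal * ‖w‖ := by
    rw [← toReal_enorm, Lp.norm_def, ← ENNReal.toReal_mul]
    refine ENNReal.toReal_mono
      (ENNReal.mul_ne_top (ENNReal.mul_ne_top hC hs) (Lp.memLp w).2.ne) ((hℓ _).trans ?_)
    rw [mul_assoc, mul_comm (eLpNorm s 2 μ)]
    gcongr
    exact eLpNorm_coeFn_mul_le _ s
  let ℓ₂ : Lp ℝ 2 μ →ₗ[ℝ] ℝ :=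
    { toFun := fun w => ℓ (w * s)
      map_add' := fun v w => (ℓ ∘ₗ mulRightLinear s).map_add v w
      map_smul' := fun c w => (ℓ ∘ₗ mulRightLinear s).map_smul c w }
  let R := (InnerProductSpace.toDual ℝ (Lp ℝ 2 μ)).symm (ℓ₂.mkContinuous _ hbound)
  refine ⟨R, (Lp.memLp R).2.ne, fun w hw => ?_⟩
  let w₂ : Lp ℝ 2 μ := ⟨w, Lp.mem_Lp_iff_eLpNorm_lt_top.2 hw.lt_top⟩
  have hint : Integrable (w * R : α →ₘ[μ] ℝ) μ :=
    (L2.integrable_inner (𝕜 := ℝ) R w₂).congr (AEEqFun.coeFn_mul w R).symm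
  have hinner : inner ℝ R w₂ = ℓ (w * s) := InnerProductSpace.toDual_symm_apply
  rw [← hinner, L2.inner_def, integralExtension_eq_integral hint,
    integral_congr_ae (AEEqFun.coeFn_mul w R)]
  rfl

lemma exists_enorm_integralExtension_mul_eq (u : α →ₘ[μ] ℝ) {A : Set α} (hA : MeasurableSet A) :
    ∃ σ : α →ₘ[μ] ℝ, (∀ᵐ x ∂μ, ‖σ x‖ₑ ≤ A.indicator 1 x) ∧
      eLpNorm (u * σ : α →ₘ[μ] ℝ) 1 μ = ∫⁻ x in A, ‖u x‖ₑ ∂μ ∧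
      (∫⁻ x in A, ‖u x‖ₑ ∂μ ≠ ⊤ →
        ‖integralExtension μ (u * σ)‖ₑ = ∫⁻ x in A, ‖u x‖ₑ ∂μ) := by
  have hσ : Measurable (signIndicator A u) := measurable_signIndicator hA u.measurable
  let σ : α →ₘ[μ] ℝ := AEEqFun.mk _ hσ.aestronglyMeasurable
  have hmul : (u * σ : α →ₘ[μ] ℝ) =ᵐ[μ] A.indicator fun x => |u x| := by
    rw [← mul_signIndicator]
    filter_upwards [AEEqFun.coeFn_mul u σ, AEEqFun.coeFn_mk _ hσ.aestronglyMeasurable] with x h₁ h₂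
    rw [h₁, Pi.mul_apply, h₂]
  have hnorm : eLpNorm (u * σ : α →ₘ[μ] ℝ) 1 μ = ∫⁻ x in A, ‖u x‖ₑ ∂μ := by
    rw [eLpNorm_congr_ae hmul, eLpNorm_indicator_eq_eLpNorm_restrict hA,
      eLpNorm_one_eq_lintegral_enorm]
    simp only [Real.enorm_abs]
  refine ⟨σ, ?_, hnorm, fun hfin => ?_⟩
  · filter_upwards [AEEqFun.coeFn_mk _ hσ.aestronglyMeasurable] with x hx
    rw [hx, Real.enorm_eq_ofReal_abs]
    refine (ENNReal.ofReal_le_ofReal (abs_signIndicator_le A u x)).trans ?_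
    by_cases hxA : x ∈ A <;> simp [hxA]
  · have hint : Integrable (u * σ : α →ₘ[μ] ℝ) μ :=
      memLp_one_iff_integrable.1 ⟨AEEqFun.aestronglyMeasurable _, (hnorm.trans_ne hfin).lt_top⟩
    have hnonneg : 0 ≤ᵐ[μ] (u * σ : α →ₘ[μ] ℝ) := by
      filter_upwards [hmul] with x hx
      rw [hx]
      exact indicator_nonneg (fun _ _ => abs_nonneg _) x
    rw [integralExtension_eq_integral hint, ← hnorm, eLpNorm_one_eq_lintegral_enorm,
      Real.enorm_of_nonneg (integral_nonneg_of_ae hnonneg),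
      ofReal_integral_eq_lintegral_ofReal hint hnonneg]
    refine lintegral_congr_ae ?_
    filter_upwards [hnonneg] with x hx
    exact (Real.enorm_of_nonneg hx).symm

lemma eLpNorm_mul_le_setLIntegral {σ : α →ₘ[μ] ℝ} {A : Set α} (hA : MeasurableSet A)
    (hσ : ∀ᵐ x ∂μ, ‖σ x‖ₑ ≤ A.indicator 1 x) (v : α →ₘ[μ] ℝ) :
    eLpNorm (v * σ : α →ₘ[μ] ℝ) 1 μ ≤ ∫⁻ x in A, ‖v x‖ₑ ∂μ := by
  rw [eLpNorm_one_eq_lintegral_enorm, ← lintegral_indicator hA]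
  refine lintegral_mono_ae ?_
  filter_upwards [AEEqFun.coeFn_mul v σ, hσ] with x hx hσx
  rw [hx, Pi.mul_apply, enorm_mul]
  by_cases hxA : x ∈ A
  · simpa [hxA] using mul_le_mul_right hσx ‖v x‖ₑ
  · simp [show σ x = 0 by simpa [hxA] using hσx]

lemma eLpNorm_top_le_one_of_enorm_le_indicator {σ : α →ₘ[μ] ℝ} {A : Set α}
    (hσ : ∀ᵐ x ∂μ, ‖σ x‖ₑ ≤ A.indicator 1 x) : eLpNorm σ ⊤ μ ≤ 1 := by
  rw [eLpNorm_exponent_top]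
  refine eLpNormEssSup_le_of_ae_enorm_bound (hσ.mono fun x hx => hx.trans ?_)
  exact indicator_le_self A 1 x

lemma enorm_le_mul_enorm_of_forall_eq_integralExtension [SigmaFinite μ] {s R : α →ₘ[μ] ℝ}
    (hs : eLpNorm s 2 μ ≠ ⊤) (hs₀ : ∀ᵐ x ∂μ, s x ≠ 0) {ℓ : (α →ₘ[μ] ℝ) →ₗ[ℝ] ℝ} {C : ℝ≥0∞}
    (hℓ : ∀ v, ‖ℓ v‖ₑ ≤ C * eLpNorm v 1 μ) (hR₂ : eLpNorm R 2 μ ≠ ⊤)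
    (hR : ∀ w : α →ₘ[μ] ℝ, eLpNorm w 2 μ ≠ ⊤ → ℓ (w * s) = integralExtension μ (w * R)) :
    ∀ᵐ x ∂μ, ‖R x‖ₑ ≤ C * ‖s x‖ₑ := by
  have hle : ∀ᵐ x ∂μ, ‖(s * R : α →ₘ[μ] ℝ) x‖ₑ ≤ C * ‖(s * s : α →ₘ[μ] ℝ) x‖ₑ := by
    refine ae_le_of_forall_setLIntegral_le_of_sigmaFinite
      (AEEqFun.measurable _).enorm fun A hA _ => ?_
    obtain ⟨σ, hσ, -, hint⟩ := exists_enorm_integralExtension_mul_eq (s * R) hA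
    have hfin : ∫⁻ x in A, ‖(s * R : α →ₘ[μ] ℝ) x‖ₑ ∂μ ≠ ⊤ := by
      refine ne_top_of_le_ne_top (ENNReal.mul_ne_top hs hR₂)
        ((setLIntegral_le_lintegral A _).trans ?_)
      rw [← eLpNorm_one_eq_lintegral_enorm]
      exact eLpNorm_coeFn_mul_le s R
    have hσs : eLpNorm (σ * s : α →ₘ[μ] ℝ) 2 μ ≠ ⊤ :=
      ne_top_of_le_ne_top (ENNReal.mul_ne_top ENNReal.one_ne_top hs)
        ((eLpNorm_coeFn_mul_le σ s).trans
          (mul_le_mul_left (eLpNorm_top_le_one_of_enorm_le_indicator hσ) _))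
    calc ∫⁻ x in A, ‖(s * R : α →ₘ[μ] ℝ) x‖ₑ ∂μ
        = ‖ℓ (s * s * σ)‖ₑ := by
          rw [← hint hfin, mul_comm, ← mul_assoc, ← hR _ hσs, mul_assoc, mul_comm]
      _ ≤ C * eLpNorm (s * s * σ : α →ₘ[μ] ℝ) 1 μ := hℓ _
      _ ≤ C * ∫⁻ x in A, ‖(s * s : α →ₘ[μ] ℝ) x‖ₑ ∂μ := by
          gcongr
          exact eLpNorm_mul_le_setLIntegral hA hσ _
      _ = ∫⁻ x in A, C * ‖(s * s : α →ₘ[μ] ℝ) x‖ₑ ∂μ :=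
          (lintegral_const_mul C (AEEqFun.measurable _).enorm).symm
  filter_upwards [hle, hs₀, AEEqFun.coeFn_mul s R, AEEqFun.coeFn_mul s s] with x hx hx₀ hsR hss
  rw [hsR, hss, Pi.mul_apply, Pi.mul_apply, enorm_mul, enorm_mul, mul_left_comm] at hx
  exact (ENNReal.mul_le_mul_iff_right (by simpa using hx₀) enorm_ne_top).1 hx

lemma eLpNorm_top_mul_le {q s R : α →ₘ[μ] ℝ} (hqs : q * s = 1) {C : ℝ≥0∞}
    (hR : ∀ᵐ x ∂μ, ‖R x‖ₑ ≤ C * ‖s x‖ₑ) : eLpNorm (R * q : α →ₘ[μ] ℝ) ⊤ μ ≤ C := by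
  rw [eLpNorm_exponent_top]
  refine eLpNormEssSup_le_of_ae_enorm_bound ?_
  filter_upwards [hR, AEEqFun.coeFn_mul R q, AEEqFun.coeFn_mul q s,
    AEEqFun.coeFn_one (β := ℝ) (μ := μ)] with x hx h₁ h₂ h₃
  have hone : q x * s x = 1 := by rw [← Pi.mul_apply, ← h₂, hqs, h₃, Pi.one_apply]
  calc ‖(R * q : α →ₘ[μ] ℝ) x‖ₑ = ‖R x‖ₑ * ‖q x‖ₑ := by rw [h₁, Pi.mul_apply, enorm_mul]
    _ ≤ C * ‖s x‖ₑ * ‖q x‖ₑ := by gcongr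
    _ = C := by rw [mul_assoc, ← enorm_mul, mul_comm (s x), hone, enorm_one, mul_one]

lemma eLpNorm_two_mul_ne_top {q s w : α →ₘ[μ] ℝ} (hqs : q * s = 1) (hs : eLpNorm s 2 μ ≠ ⊤)
    {n : ℕ} (hw : ∀ᵐ x ∂μ, |w x| ≤ n * s x ^ 2) : eLpNorm (w * q : α →ₘ[μ] ℝ) 2 μ ≠ ⊤ := by
  refine (MemLp.of_le_mul (c := n) ⟨s.aestronglyMeasurable, hs.lt_top⟩
    (AEEqFun.aestronglyMeasurable _) ?_).2.ne
  filter_upwards [hw, AEEqFun.coeFn_mul w q, AEEqFun.coeFn_mul q s,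
    AEEqFun.coeFn_one (β := ℝ) (μ := μ)] with x hx h₁ h₂ h₃
  have hone : q x * s x = 1 := by rw [← Pi.mul_apply, ← h₂, hqs, h₃, Pi.one_apply]
  calc ‖(w * q : α →ₘ[μ] ℝ) x‖ = |w x| * |q x| := by
        rw [h₁, Pi.mul_apply, Real.norm_eq_abs, abs_mul]
    _ ≤ n * s x ^ 2 * |q x| := by gcongr
    _ = n * |s x| * |q x * s x| := by rw [abs_mul, ← sq_abs]; ring
    _ = n * ‖s x‖ := by rw [hone, abs_one, mul_one, Real.norm_eq_abs]

lemma exists_eLpNorm_top_le_eq_integralExtension [SigmaFinite μ] {ℓ : (α →ₘ[μ] ℝ) →ₗ[ℝ] ℝ}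
    {C : ℝ≥0∞} (hC : C ≠ ⊤) (hℓ : ∀ v, ‖ℓ v‖ₑ ≤ C * eLpNorm v 1 μ) :
    ∃ r : α →ₘ[μ] ℝ, eLpNorm r ⊤ μ ≤ C ∧
      ∀ v : α →ₘ[μ] ℝ, eLpNorm v 1 μ ≠ ⊤ → ℓ v = integralExtension μ (r * v) := by
  obtain ⟨q, s, hqs, hpos, hs⟩ := exists_mul_eq_one_pos_eLpNorm_two_ne_top μ
  obtain ⟨R, hR₂, hR⟩ := exists_eq_integralExtension_of_mul hs hC hℓ
  have hr : eLpNorm (R * q : α →ₘ[μ] ℝ) ⊤ μ ≤ C := eLpNorm_top_mul_le hqs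
    (enorm_le_mul_enorm_of_forall_eq_integralExtension hs (hpos.mono fun _ => ne_of_gt) hℓ hR₂ hR)
  refine ⟨R * q, hr, fun v hv => ?_⟩
  rw [mul_comm]
  refine sub_eq_zero.1 ?_
  refine eq_zero_of_forall_abs_le_mul (ℓ := ℓ - integralExtension μ ∘ₗ mulRightLinear (R * q))
    (s.measurable.pow_const 2) (hpos.mono fun _ hx => pow_pos hx 2)
    (ENNReal.add_ne_top.2 ⟨hC, hC⟩) (fun u => ?_) (fun n w hw _ => sub_eq_zero.2 ?_) hv
  · refine enorm_sub_le.trans ((add_le_add (hℓ u) ?_).trans_eq (add_mul _ _ _).symm)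
    refine (enorm_integralExtension_le _).trans
      ((eLpNorm_coeFn_mul_le (p := 1) (q := ⊤) u _).trans ?_)
    rw [mul_comm]
    gcongr
  · calc ℓ w = ℓ (w * q * s) := by rw [mul_assoc, hqs, mul_one]
      _ = integralExtension μ (w * q * R) := hR _ (eLpNorm_two_mul_ne_top hqs hs hw)
      _ = integralExtension μ (w * (R * q)) := by rw [mul_comm R, mul_assoc]

end DualOfLOne

lemma exists_linearMap_eqOn_eqOn {K V W : Type*} [DivisionRing K] [AddCommGroup V] [Module K V]
    [AddCommGroup W] [Module K W] {p q : Submodule K V} {f g : V →ₗ[K] W}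
    (hfg : ∀ x ∈ p, x ∈ q → f x = g x) :
    ∃ T : V →ₗ[K] W, EqOn T f p ∧ EqOn T g q := by
  let P : V →ₗ.[K] W := ⟨p, f.domRestrict p⟩
  let Q : V →ₗ.[K] W := ⟨q, g.domRestrict q⟩
  have hPQ (x : P.domain) (y : Q.domain) (hxy : (x : V) = y) : P x = Q y :=
    (hfg x x.2 (hxy ▸ y.2)).trans (congrArg g hxy)
  obtain ⟨T, hT⟩ := LinearMap.exists_extend (P.sup Q hPQ).toFun
  refine ⟨T, fun x hx => ?_, fun x hx => ?_⟩
  · have hle := P.left_le_sup Q hPQ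
    exact (LinearMap.congr_fun hT ⟨x, hle.1 hx⟩).trans (hle.2 (x := ⟨x, hx⟩) rfl).symm
  · have hle := P.right_le_sup Q hPQ
    exact (LinearMap.congr_fun hT ⟨x, hle.1 hx⟩).trans (hle.2 (x := ⟨x, hx⟩) rfl).symm

section Operators

variable {α : Type*} [MeasurableSpace α] {μ : Measure α}

lemma eLpNorm_one_le_of_forall_enorm_integralExtension_le [SigmaFinite μ] {r : α →ₘ[μ] ℝ}
    {C : ℝ≥0∞}
    (hfin : ∀ v : α →ₘ[μ] ℝ, eLpNorm v 1 μ ≠ ⊤ → eLpNorm v ⊤ μ ≠ ⊤ →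
      eLpNorm (r * v : α →ₘ[μ] ℝ) 1 μ ≠ ⊤)
    (hle : ∀ v : α →ₘ[μ] ℝ, eLpNorm v 1 μ ≠ ⊤ → eLpNorm v ⊤ μ ≠ ⊤ →
      ‖integralExtension μ (r * v)‖ₑ ≤ C * eLpNorm v ⊤ μ) :
    eLpNorm r 1 μ ≤ C := by
  rw [eLpNorm_one_eq_lintegral_enorm, ← setLIntegral_univ, ← iUnion_spanningSets μ,
    setLIntegral_iUnion_of_directed _ (monotone_spanningSets μ).directed_le]
  refine iSup_le fun n => ?_
  obtain ⟨σ, hσ, hnorm, hint⟩ :=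
    exists_enorm_integralExtension_mul_eq r (measurableSet_spanningSets μ n)
  have hσ_top := eLpNorm_top_le_one_of_enorm_le_indicator hσ
  have hσ_one : eLpNorm σ 1 μ ≠ ⊤ := by
    refine ne_top_of_le_ne_top (measure_spanningSets_lt_top μ n).ne ?_
    rw [eLpNorm_one_eq_lintegral_enorm, ← lintegral_indicator_one (measurableSet_spanningSets μ n)]
    exact lintegral_mono_ae hσ
  have hσ_top' : eLpNorm σ ⊤ μ ≠ ⊤ := ne_top_of_le_ne_top ENNReal.one_ne_top hσ_top
  rw [← hint (hnorm.symm.trans_ne (hfin σ hσ_one hσ_top'))]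
  exact (hle σ hσ_one hσ_top').trans (mul_le_of_le_one_right zero_le hσ_top)

lemma eLpNorm_coeFn_mul_ne_top {p q r : ℝ≥0∞} [ENNReal.HolderTriple p q r] {u v : α →ₘ[μ] ℝ}
    (hu : eLpNorm u p μ ≠ ⊤) (hv : eLpNorm v q μ ≠ ⊤) :
    eLpNorm (u * v : α →ₘ[μ] ℝ) r μ ≠ ⊤ :=
  ne_top_of_le_ne_top (ENNReal.mul_ne_top hu hv) (eLpNorm_coeFn_mul_le u v)

lemma eq_of_forall_integralExtension_mul_eq [SigmaFinite μ] {r₁ r₂ : α →ₘ[μ] ℝ}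
    (hfin₁ : ∀ v : α →ₘ[μ] ℝ, eLpNorm v 1 μ ≠ ⊤ → eLpNorm v ⊤ μ ≠ ⊤ →
      eLpNorm (r₁ * v : α →ₘ[μ] ℝ) 1 μ ≠ ⊤)
    (hfin₂ : ∀ v : α →ₘ[μ] ℝ, eLpNorm v 1 μ ≠ ⊤ → eLpNorm v ⊤ μ ≠ ⊤ →
      eLpNorm (r₂ * v : α →ₘ[μ] ℝ) 1 μ ≠ ⊤)
    (heq : ∀ v : α →ₘ[μ] ℝ, eLpNorm v 1 μ ≠ ⊤ → eLpNorm v ⊤ μ ≠ ⊤ →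
      integralExtension μ (r₁ * v) = integralExtension μ (r₂ * v)) : r₁ = r₂ := by
  have hsub (v : α →ₘ[μ] ℝ) : (r₁ - r₂) * v = r₁ * v - r₂ * v := (mulRightLinear v).map_sub r₁ r₂
  have hnorm : eLpNorm (r₁ - r₂ : α →ₘ[μ] ℝ) 1 μ ≤ 0 := by
    refine eLpNorm_one_le_of_forall_enorm_integralExtension_le (fun v hv₁ hv₂ => ?_)
      fun v hv₁ hv₂ => ?_
    · rw [hsub]
      exact mem_lpSubmodule_iff.1 (sub_mem (mem_lpSubmodule_iff.2 (hfin₁ v hv₁ hv₂))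
        (mem_lpSubmodule_iff.2 (hfin₂ v hv₁ hv₂)))
    · rw [hsub, map_sub, heq v hv₁ hv₂, sub_self, enorm_zero]
      exact zero_le
  rw [nonpos_iff_eq_zero, eLpNorm_eq_zero_iff (AEEqFun.aestronglyMeasurable _) one_ne_zero] at hnorm
  exact sub_eq_zero.1 (AEEqFun.ext (hnorm.trans AEEqFun.coeFn_zero.symm))

variable {β : (α →ₘ[μ] ℝ) →ₗ[ℝ] (α →ₘ[μ] ℝ) →ₗ[ℝ] ℝ}

lemma IsAdmissible.exists_linearMap_top [SigmaFinite μ] (hβ : IsAdmissible β) :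
    ∃ T : (α →ₘ[μ] ℝ) →ₗ[ℝ] (α →ₘ[μ] ℝ),
      (∀ u : α →ₘ[μ] ℝ, eLpNorm u ⊤ μ ≠ ⊤ → eLpNorm (T u) ⊤ μ ≤ eLpNorm u ⊤ μ) ∧
      ∀ u v : α →ₘ[μ] ℝ, eLpNorm u ⊤ μ ≠ ⊤ → eLpNorm v 1 μ ≠ ⊤ →
        β u v = integralExtension μ (T u * v) := by
  have hrep (u : Lp.LpSubmodule ℝ ℝ ⊤ μ) :=
    exists_eLpNorm_top_le_eq_integralExtension (mem_lpSubmodule_iff.1 u.2) (hβ.enorm_le_top_one u)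
  choose r hr hβr using hrep
  have hr_mem (u : Lp.LpSubmodule ℝ ℝ ⊤ μ) : r u ∈ Lp.LpSubmodule ℝ ℝ ⊤ μ :=
    mem_lpSubmodule_iff.2 (ne_top_of_le_ne_top (mem_lpSubmodule_iff.1 u.2) (hr u))
  have hr_eq {u : Lp.LpSubmodule ℝ ℝ ⊤ μ} {r' : α →ₘ[μ] ℝ} (hr' : r' ∈ Lp.LpSubmodule ℝ ℝ ⊤ μ)
      (h : ∀ v : α →ₘ[μ] ℝ, eLpNorm v 1 μ ≠ ⊤ → β u v = integralExtension μ (r' * v)) :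
      r u = r' :=
    eq_of_forall_integralExtension_mul_eq
      (fun _ hv₁ _ => eLpNorm_coeFn_mul_ne_top (mem_lpSubmodule_iff.1 (hr_mem u)) hv₁)
      (fun _ hv₁ _ => eLpNorm_coeFn_mul_ne_top (mem_lpSubmodule_iff.1 hr') hv₁)
      (fun v hv₁ _ => (hβr u v hv₁).symm.trans (h v hv₁))
  let T₀ : Lp.LpSubmodule ℝ ℝ ⊤ μ →ₗ[ℝ] (α →ₘ[μ] ℝ) :=
    { toFun := r
      map_add' := fun u w => hr_eq (add_mem (hr_mem u) (hr_mem w)) fun v hv => by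
        rw [Submodule.coe_add, map_add, LinearMap.add_apply, hβr u v hv, hβr w v hv]
        exact ((integralExtension μ ∘ₗ mulRightLinear v).map_add (r u) (r w)).symm
      map_smul' := fun c u => hr_eq (Submodule.smul_mem _ c (hr_mem u)) fun v hv => by
        rw [Submodule.coe_smul, map_smul, LinearMap.smul_apply, hβr u v hv]
        exact ((integralExtension μ ∘ₗ mulRightLinear v).map_smul c (r u)).symm }
  obtain ⟨T, hT⟩ := T₀.exists_extend
  have hTr (u : α →ₘ[μ] ℝ) (hu : eLpNorm u ⊤ μ ≠ ⊤) : T u = r ⟨u, mem_lpSubmodule_iff.2 hu⟩ :=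
    LinearMap.congr_fun hT ⟨u, _⟩
  refine ⟨T, fun u hu => ?_, fun u v hu hv => ?_⟩
  · rw [hTr u hu]
    exact hr _
  · rw [hTr u hu]
    exact hβr ⟨u, _⟩ v hv

lemma exists_linearMap_eqOn_eLpNorm_one_le {T : (α →ₘ[μ] ℝ) →ₗ[ℝ] (α →ₘ[μ] ℝ)}
    (hT : ∀ u : α →ₘ[μ] ℝ, eLpNorm u 1 μ ≠ ⊤ → eLpNorm u ⊤ μ ≠ ⊤ →
      eLpNorm (T u) 1 μ ≤ eLpNorm u 1 μ) :
    ∃ T₁ : (α →ₘ[μ] ℝ) →ₗ[ℝ] (α →ₘ[μ] ℝ),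
      (∀ u : α →ₘ[μ] ℝ, eLpNorm u 1 μ ≠ ⊤ → eLpNorm (T₁ u) 1 μ ≤ eLpNorm u 1 μ) ∧
      ∀ u : α →ₘ[μ] ℝ, eLpNorm u 1 μ ≠ ⊤ → eLpNorm u ⊤ μ ≠ ⊤ → T₁ u = T u := by
  let V := Lp.LpSubmodule ℝ ℝ 1 μ ⊓ Lp.LpSubmodule ℝ ℝ ⊤ μ
  have hVT (u : V) : eLpNorm (T u) 1 μ ≤ eLpNorm (u : α →ₘ[μ] ℝ) 1 μ :=
    hT u (mem_lpSubmodule_iff.1 u.2.1) (mem_lpSubmodule_iff.1 u.2.2)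
  let e : V →ₗ[ℝ] Lp ℝ 1 μ :=
    { toFun := fun u => ⟨u, u.2.1⟩, map_add' := fun _ _ => rfl, map_smul' := fun _ _ => rfl }
  let F : V →ₗ[ℝ] Lp ℝ 1 μ :=
    { toFun := fun u => ⟨T u, Lp.mem_Lp_iff_eLpNorm_lt_top.2
        ((hVT u).trans_lt (Lp.mem_Lp_iff_eLpNorm_lt_top.1 u.2.1))⟩
      map_add' := fun u v => Subtype.ext (T.map_add u v)
      map_smul' := fun c u => Subtype.ext (T.map_smul c u) }
  have hF (u : V) : ‖F u‖ ≤ 1 * ‖e u‖ := by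
    rw [one_mul, Lp.norm_def, Lp.norm_def]
    exact ENNReal.toReal_mono (mem_lpSubmodule_iff.1 u.2.1) (hVT u)
  have he : DenseRange e := by
    refine (Lp.simpleFunc.dense ENNReal.one_ne_top).mono fun w hw => ?_
    have hw_top : MemLp w ⊤ μ := (memLp_congr_ae
      (Lp.simpleFunc.toSimpleFunc_eq_toFun (⟨w, hw⟩ : Lp.simpleFunc ℝ 1 μ))).1
      (SimpleFunc.memLp_top _ μ)
    exact ⟨⟨w, w.2, Lp.mem_Lp_iff_memLp.2 hw_top⟩, rfl⟩
  obtain ⟨T₁, hT₁⟩ := LinearMap.exists_extend (p := Lp.LpSubmodule ℝ ℝ 1 μ)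
    ((Lp.LpSubmodule ℝ ℝ 1 μ).subtype ∘ₗ (F.extendOfNorm e).toLinearMap)
  have hT₁_eq (u : Lp ℝ 1 μ) : T₁ u = (F.extendOfNorm e u : α →ₘ[μ] ℝ) := LinearMap.congr_fun hT₁ u
  refine ⟨T₁, fun u hu => ?_, fun u hu₁ hu₂ => ?_⟩
  · let u₁ : Lp ℝ 1 μ := ⟨u, mem_lpSubmodule_iff.2 hu⟩
    have hle := LinearMap.norm_extendOfNorm_apply_le he 1 hF u₁
    rw [one_mul, ← enorm_le_iff_norm_le, Lp.enorm_def, Lp.enorm_def, ← hT₁_eq] at hle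
    exact hle
  · let uV : V := ⟨u, mem_lpSubmodule_iff.2 hu₁, mem_lpSubmodule_iff.2 hu₂⟩
    exact (hT₁_eq (e uV)).trans (congrArg Subtype.val (LinearMap.extendOfNorm_eq he ⟨1, hF⟩ uV))

lemma IsAdmissible.eq_integralExtension_of_eq_inter (hβ : IsAdmissible β)
    {T : (α →ₘ[μ] ℝ) →ₗ[ℝ] (α →ₘ[μ] ℝ)} (hT : ∀ u, eLpNorm (T u) 1 μ ≤ eLpNorm u 1 μ)
    {v : α →ₘ[μ] ℝ} (hv : eLpNorm v ⊤ μ ≠ ⊤)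
    (heq : ∀ u : α →ₘ[μ] ℝ, eLpNorm u 1 μ ≠ ⊤ → eLpNorm u ⊤ μ ≠ ⊤ →
      β u v = integralExtension μ (T u * v))
    {u : α →ₘ[μ] ℝ} (hu : eLpNorm u 1 μ ≠ ⊤) : β u v = integralExtension μ (T u * v) := by
  refine sub_eq_zero.1 (eq_zero_of_forall_abs_le_mul (h := 1)
    (ℓ := β.flip v - integralExtension μ ∘ₗ mulRightLinear v ∘ₗ T) (C := 2 * eLpNorm v ⊤ μ)
    measurable_one (.of_forall fun _ => one_pos) (ENNReal.mul_ne_top ENNReal.ofNat_ne_top hv)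
    (fun w => ?_) (fun n w hw hw₁ => sub_eq_zero.2 (heq w hw₁ ?_)) hu)
  · have hTw : ‖integralExtension μ (T w * v)‖ₑ ≤ eLpNorm w 1 μ * eLpNorm v ⊤ μ :=
      (enorm_integralExtension_le _).trans
        ((eLpNorm_coeFn_mul_le (p := 1) (q := ⊤) _ v).trans (by gcongr; exact hT w))
    calc ‖β w v - integralExtension μ (T w * v)‖ₑ
        ≤ ‖β w v‖ₑ + ‖integralExtension μ (T w * v)‖ₑ := enorm_sub_le
      _ ≤ eLpNorm w 1 μ * eLpNorm v ⊤ μ + eLpNorm w 1 μ * eLpNorm v ⊤ μ :=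
        add_le_add (hβ.enorm_le_one_top w v) hTw
      _ = 2 * eLpNorm v ⊤ μ * eLpNorm w 1 μ := by ring
  · refine (memLp_top_of_bound w.aestronglyMeasurable n (hw.mono fun x hx => ?_)).2.ne
    simpa using hx

lemma IsAdmissible.exists_linearMap [SigmaFinite μ] (hβ : IsAdmissible β) :
    ∃ T : (α →ₘ[μ] ℝ) →ₗ[ℝ] (α →ₘ[μ] ℝ),
      (∀ u, eLpNorm (T u) 1 μ ≤ eLpNorm u 1 μ) ∧ (∀ u, eLpNorm (T u) ⊤ μ ≤ eLpNorm u ⊤ μ) ∧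
      ∀ u v : α →ₘ[μ] ℝ, eLpNorm u 1 μ ≠ ⊤ ∨ eLpNorm u ⊤ μ ≠ ⊤ →
        eLpNorm v 1 μ ≠ ⊤ → eLpNorm v ⊤ μ ≠ ⊤ → β u v = integralExtension μ (T u * v) := by
  obtain ⟨T₀, hT₀, hβT₀⟩ := hβ.exists_linearMap_top
  have hT₀_one (u : α →ₘ[μ] ℝ) (_ : eLpNorm u 1 μ ≠ ⊤) (hu : eLpNorm u ⊤ μ ≠ ⊤) :
      eLpNorm (T₀ u) 1 μ ≤ eLpNorm u 1 μ := by
    refine eLpNorm_one_le_of_forall_enorm_integralExtension_le (fun v hv _ =>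
      eLpNorm_coeFn_mul_ne_top (ne_top_of_le_ne_top hu (hT₀ u hu)) hv) fun v hv _ => ?_
    rw [← hβT₀ u v hu hv]
    exact hβ.enorm_le_one_top u v
  obtain ⟨T₁, hT₁, hT₁₀⟩ := exists_linearMap_eqOn_eLpNorm_one_le hT₀_one
  obtain ⟨T, hTT₁, hTT₀⟩ := exists_linearMap_eqOn_eqOn (p := Lp.LpSubmodule ℝ ℝ 1 μ)
    (q := Lp.LpSubmodule ℝ ℝ ⊤ μ) (f := T₁) (g := T₀) fun u hu₁ hu₂ =>
      hT₁₀ u (mem_lpSubmodule_iff.1 hu₁) (mem_lpSubmodule_iff.1 hu₂)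
  have hT_one (u : α →ₘ[μ] ℝ) : eLpNorm (T u) 1 μ ≤ eLpNorm u 1 μ := by
    by_cases hu : eLpNorm u 1 μ = ⊤
    · exact le_top.trans_eq hu.symm
    · exact (hTT₁ (mem_lpSubmodule_iff.2 hu)).symm ▸ hT₁ u hu
  have hT_top (u : α →ₘ[μ] ℝ) : eLpNorm (T u) ⊤ μ ≤ eLpNorm u ⊤ μ := by
    by_cases hu : eLpNorm u ⊤ μ = ⊤
    · exact le_top.trans_eq hu.symm
    · exact (hTT₀ (mem_lpSubmodule_iff.2 hu)).symm ▸ hT₀ u hu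
  have hβT (u v : α →ₘ[μ] ℝ) (hu : eLpNorm u ⊤ μ ≠ ⊤) (hv : eLpNorm v 1 μ ≠ ⊤) :
      β u v = integralExtension μ (T u * v) := by
    rw [hTT₀ (mem_lpSubmodule_iff.2 hu)]
    exact hβT₀ u v hu hv
  refine ⟨T, hT_one, hT_top, fun u v hu hv₁ hv₂ => ?_⟩
  exact hu.elim (hβ.eq_integralExtension_of_eq_inter hT_one hv₂ fun w _ hw => hβT w v hw hv₁)
    fun hu => hβT u v hu hv₁

end Operators

section Calderon

variable {α : Type*} [MeasurableSpace α] {μ : Measure α}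

lemma exists_linearMap_eq_of_kFunctional_le [SigmaFinite μ] {f₁ f₂ g : α →ₘ[μ] ℝ}
    (hf₁ : eLpNorm f₁ 1 μ ≠ ⊤) (hf₂ : eLpNorm f₂ ⊤ μ ≠ ⊤)
    (hgf : ∀ t, kFunctional μ g t ≤ kFunctional μ (f₁ + f₂ : α →ₘ[μ] ℝ) t) :
    ∃ T : (α →ₘ[μ] ℝ) →ₗ[ℝ] (α →ₘ[μ] ℝ), (∀ u, eLpNorm (T u) 1 μ ≤ eLpNorm u 1 μ) ∧
      (∀ u, eLpNorm (T u) ⊤ μ ≤ eLpNorm u ⊤ μ) ∧ T (f₁ + f₂) = g := by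
  have hfin (v : α →ₘ[μ] ℝ) (hv₁ : eLpNorm v 1 μ ≠ ⊤) (hv₂ : eLpNorm v ⊤ μ ≠ ⊤) :=
    admissibleSup_add_ne_top hf₁ hf₂ hv₁ hv₂
  have hg (v : α →ₘ[μ] ℝ) (hv : eLpNorm v ⊤ μ ≠ ⊤) :=
    eLpNorm_mul_le_admissibleSup (kFunctional_add_ne_top hf₁ hf₂) hgf hv
  obtain ⟨β, hβ, hβg⟩ := exists_isAdmissible_eq_integralExtension hfin hg
  obtain ⟨T, hT_one, hT_top, hβT⟩ := hβ.exists_linearMap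
  have hTv (v : α →ₘ[μ] ℝ) : T (f₁ + f₂) * v = T f₁ * v + T f₂ * v :=
    (mulRightLinear v ∘ₗ T).map_add f₁ f₂
  refine ⟨T, hT_one, hT_top, eq_of_forall_integralExtension_mul_eq (fun v hv₁ hv₂ => ?_)
    (fun v hv₁ hv₂ => ?_) fun v hv₁ hv₂ => ?_⟩
  · rw [hTv, ← mem_lpSubmodule_iff]
    exact add_mem
      (mem_lpSubmodule_iff.2 (eLpNorm_coeFn_mul_ne_top
        (ne_top_of_le_ne_top hf₁ (hT_one f₁)) hv₂))
      (mem_lpSubmodule_iff.2 (eLpNorm_coeFn_mul_ne_top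
        (ne_top_of_le_ne_top hf₂ (hT_top f₂)) hv₁))
  · rw [mul_comm]
    exact ne_top_of_le_ne_top (hfin v hv₁ hv₂) (hg v hv₂)
  · rw [hTv, map_add, ← hβT f₁ v (.inl hf₁) hv₁ hv₂, ← hβT f₂ v (.inr hf₂) hv₁ hv₂, mul_comm g,
      ← hβg v hv₁ hv₂, map_add, LinearMap.add_apply]

lemma exists_linearMap_eq_of_notMem_sup {f : α →ₘ[μ] ℝ}
    (hf : f ∉ Lp.LpSubmodule ℝ ℝ 1 μ ⊔ Lp.LpSubmodule ℝ ℝ ⊤ μ) (g : α →ₘ[μ] ℝ) :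
    ∃ T : (α →ₘ[μ] ℝ) →ₗ[ℝ] (α →ₘ[μ] ℝ), (∀ u, eLpNorm (T u) 1 μ ≤ eLpNorm u 1 μ) ∧
      (∀ u, eLpNorm (T u) ⊤ μ ≤ eLpNorm u ⊤ μ) ∧ T f = g := by
  obtain ⟨φ, hφf, hφ⟩ := Submodule.exists_le_ker_of_notMem hf
  have hT {p : ℝ≥0∞} (hp : Lp.LpSubmodule ℝ ℝ p μ ≤ LinearMap.ker φ) (u : α →ₘ[μ] ℝ) :
      eLpNorm (φ.smulRight ((φ f)⁻¹ • g) u) p μ ≤ eLpNorm u p μ := by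
    by_cases hu : eLpNorm u p μ = ⊤
    · exact le_top.trans_eq hu.symm
    · rw [LinearMap.smulRight_apply, LinearMap.mem_ker.1 (hp (mem_lpSubmodule_iff.2 hu)), zero_smul,
        eLpNorm_congr_ae AEEqFun.coeFn_zero, eLpNorm_zero]
      exact zero_le
  exact ⟨φ.smulRight ((φ f)⁻¹ • g), hT (le_sup_left.trans hφ), hT (le_sup_right.trans hφ),
    smul_inv_smul₀ hφf g⟩

end Calderon

/-- Calderón's theorem for the couple `(L¹, L∞)`.
Forward direction: if `∫₀ᵗ g* ≤ ∫₀ᵗ f*` for all `t > 0`, then there is a linear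
operator `T`, simultaneously contractive on `L¹` and on `L∞`, with `Tf = g`.
Converse: any such contraction `T` satisfies `∫₀ᵗ (Tf)* ≤ ∫₀ᵗ f*`. -/
theorem calderon_L1_Linfty {α : Type*} [MeasurableSpace α]
    (μ : Measure α) [SigmaFinite μ] :
    (∀ f g : α →ₘ[μ] ℝ,
      (∀ t : ℝ, 0 < t →
        ∫⁻ s in Set.Ioc (0:ℝ) t, decRearr μ (g : α → ℝ) s ≤
          ∫⁻ s in Set.Ioc (0:ℝ) t, decRearr μ (f : α → ℝ) s) →
      ∃ T : (α →ₘ[μ] ℝ) →ₗ[ℝ] (α →ₘ[μ] ℝ),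
        (∀ u : α →ₘ[μ] ℝ, eLpNorm ((T u : α →ₘ[μ] ℝ) : α → ℝ) 1 μ ≤
          eLpNorm (u : α → ℝ) 1 μ) ∧
        (∀ u : α →ₘ[μ] ℝ, eLpNorm ((T u : α →ₘ[μ] ℝ) : α → ℝ) ⊤ μ ≤
          eLpNorm (u : α → ℝ) ⊤ μ) ∧
        T f = g) ∧
    (∀ T : (α →ₘ[μ] ℝ) →ₗ[ℝ] (α →ₘ[μ] ℝ),
      (∀ u : α →ₘ[μ] ℝ, eLpNorm ((T u : α →ₘ[μ] ℝ) : α → ℝ) 1 μ ≤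
        eLpNorm (u : α → ℝ) 1 μ) →
      (∀ u : α →ₘ[μ] ℝ, eLpNorm ((T u : α →ₘ[μ] ℝ) : α → ℝ) ⊤ μ ≤
        eLpNorm (u : α → ℝ) ⊤ μ) →
      ∀ (f : α →ₘ[μ] ℝ) (t : ℝ), 0 < t →
        ∫⁻ s in Set.Ioc (0:ℝ) t, decRearr μ ((T f : α →ₘ[μ] ℝ) : α → ℝ) s ≤
          ∫⁻ s in Set.Ioc (0:ℝ) t, decRearr μ (f : α → ℝ) s) := by
  refine ⟨fun f g hgf => ?_, fun T hT_one hT_top f t ht => kFunctional_map_le T hT_one hT_top f ht⟩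
  by_cases hf : f ∈ Lp.LpSubmodule ℝ ℝ 1 μ ⊔ Lp.LpSubmodule ℝ ℝ ⊤ μ
  · obtain ⟨f₁, hf₁, f₂, hf₂, rfl⟩ := Submodule.mem_sup.1 hf
    refine exists_linearMap_eq_of_kFunctional_le (mem_lpSubmodule_iff.1 hf₁)
      (mem_lpSubmodule_iff.1 hf₂) fun t => ?_
    rcases lt_or_ge 0 t with ht | ht
    · exact hgf t ht
    · simp [kFunctional, ht]
  · exact exists_linearMap_eq_of_notMem_sup hf g
end
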